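/- There exists a residual subset R of the metric space (F_(C,β), d_α) (i.e., a set containing a countable intersection of open dense subsets) such that for every f ∈ R, for μ̂-almost every y ∈ [0,1] the conditional measure μ_y of the Rokhlin disintegration is a Dirac measure: there exists x_y ∈ [0,1] such that μ_y = δ_{(x_y, f(x_y, y))}. -/

import Mathlib

open MeasureTheory Set Filter Topology
open scoped ENNReal

noncomputable section

/-- The unit square `M = [0,1]²`. -/
def MSq : Set (ℝ × ℝ) := unitInterval ×ˢ unitInterval

/-- Lower `(C,γ)`-bi-Hölder bound in the second variable. -/
def BiHolderLower (C γ : ℝ) (f : ℝ → ℝ → ℝ) : Prop :=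
  ∀ x ∈ unitInterval, ∀ y₁ ∈ unitInterval, ∀ y₂ ∈ unitInterval, y₁ ≠ y₂ →
    C⁻¹ * |y₂ - y₁| ^ (1 / γ) ≤ |f x y₂ - f x y₁|

/-- Upper `(C,γ)`-Hölder bound in the second variable. -/
def BiHolderUpper (C γ : ℝ) (f : ℝ → ℝ → ℝ) : Prop :=
  ∀ x ∈ unitInterval, ∀ y₁ ∈ unitInterval, ∀ y₂ ∈ unitInterval, y₁ ≠ y₂ →
    |f x y₂ - f x y₁| ≤ C * |y₂ - y₁| ^ γ

/-- Membership in the space `F_(C,γ)`: conditions (i)–(iv); `fx` plays the role of `∂f/∂x`. -/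
structure IsFol (C γ : ℝ) (f fx : ℝ → ℝ → ℝ) : Prop where
  mapsTo : ∀ x ∈ unitInterval, ∀ y ∈ unitInterval, f x y ∈ unitInterval
  hasDeriv : ∀ y ∈ unitInterval, ∀ x ∈ unitInterval,
    HasDerivWithinAt (fun x' => f x' y) (fx x y) unitInterval x
  derivCont : ContinuousOn (fun p : ℝ × ℝ => fx p.1 p.2) MSq
  eq_id : ∀ y ∈ unitInterval, f 0 y = y
  eq_bot : ∀ x ∈ unitInterval, f x 0 = 0
  eq_top : ∀ x ∈ unitInterval, f x 1 = 1
  lower : BiHolderLower C γ f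
  upper : BiHolderUpper C γ f

/-- The space `F_(C,γ)`. -/
structure Fol (C γ : ℝ) where
  f : ℝ → ℝ → ℝ
  fx : ℝ → ℝ → ℝ
  isFol : IsFol C γ f fx

/-- The inverse of `y ↦ f x y` on `[0,1]`, i.e. the holonomy `h^f_{x,0}`. -/
def hinv (f : ℝ → ℝ → ℝ) (x : ℝ) : ℝ → ℝ := Function.invFunOn (f x) unitInterval

/-- The `C⁰` distance over the square. -/
def C0dist (u v : ℝ → ℝ → ℝ) : ℝ :=
  sSup {r | ∃ x ∈ unitInterval, ∃ y ∈ unitInterval, r = |u x y - v x y|}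

/-- The `α`-Hölder seminorm of the difference `h - k` on `[0,1]`. -/
def holDist (α : ℝ) (h k : ℝ → ℝ) : ℝ :=
  sSup {r | ∃ y₁ ∈ unitInterval, ∃ y₂ ∈ unitInterval, y₁ ≠ y₂ ∧
    r = |(h y₂ - k y₂) - (h y₁ - k y₁)| / |y₂ - y₁| ^ α}

/-- The distance `d_α`, on raw data `(f, ∂f/∂x)`, `(g, ∂g/∂x)`. -/
def dalpha (α : ℝ) (f fx g gx : ℝ → ℝ → ℝ) : ℝ :=
  C0dist f g + C0dist fx gx +
    sSup {r | ∃ x ∈ unitInterval,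
      r = max (holDist α (f x) (g x)) (holDist α (hinv f x) (hinv g x))}

/-- The distance `d_α` on `F_(C,γ)`. -/
def dalphaF {C γ : ℝ} (α : ℝ) (F G : Fol C γ) : ℝ := dalpha α F.f F.fx G.f G.fx

/-- Openness with respect to a distance function. -/
def IsOpenWrt {X : Type*} (d : X → X → ℝ) (s : Set X) : Prop :=
  ∀ f ∈ s, ∃ ε > 0, ∀ g, d g f < ε → g ∈ s

/-- Density with respect to a distance function. -/
def IsDenseWrt {X : Type*} (d : X → X → ℝ) (s : Set X) : Prop :=
  ∀ f : X, ∀ ε > 0, ∃ g ∈ s, d g f < ε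

/-- Lebesgue measure `μ` on the unit square `M`. -/
def muM : Measure (ℝ × ℝ) := volume.restrict MSq

/-- The projection `π_f(x,z) = f(x,·)⁻¹(z)` along the leaves. -/
def projF (f : ℝ → ℝ → ℝ) : ℝ × ℝ → ℝ := fun p => hinv f p.1 p.2

/-- The quotient measure `μ̂ = (π_f)_* μ`. -/
def quotM {C γ : ℝ} (F : Fol C γ) : Measure ℝ := muM.map (projF F.f)

/-- The leaf `L_y = {(x, f(x,y)) : x ∈ [0,1]}`. -/
def Leaf {C γ : ℝ} (F : Fol C γ) (y : ℝ) : Set (ℝ × ℝ) :=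
  (fun x => (x, F.f x y)) '' unitInterval

/-- `(ν_y)` is a Rokhlin disintegration of Lebesgue measure on the square w.r.t. `π_f`. -/
def IsDisint {C γ : ℝ} (F : Fol C γ) (ν : ℝ → Measure (ℝ × ℝ)) : Prop :=
  (∀ y, IsProbabilityMeasure (ν y)) ∧
  (∀ E : Set (ℝ × ℝ), MeasurableSet E → Measurable fun y => ν y E) ∧
  (∀ᵐ y ∂quotM F, ν y (Leaf F y) = 1) ∧
  (∀ E : Set (ℝ × ℝ), MeasurableSet E → muM E = ∫⁻ y, ν y E ∂quotM F)

/-- The element `P_i` of the partition `P_{f,n}`. -/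
def Pelt (f : ℝ → ℝ → ℝ) (n i : ℕ) : Set (ℝ × ℝ) :=
  {p | p.1 ∈ unitInterval ∧ f p.1 ((i : ℝ) / 2 ^ n) ≤ p.2 ∧ p.2 < f p.1 (((i : ℝ) + 1) / 2 ^ n)}

/-- `Ĩ = [b₁,b₂] × [0,1]`. -/
def Itilde (b₁ b₂ : ℝ) : Set (ℝ × ℝ) := Icc b₁ b₂ ×ˢ unitInterval

/-- The set `A_{n,m,I}`. -/
def Aset (C γ : ℝ) (n m : ℕ) (b₁ b₂ : ℝ) : Set (Fol C γ) :=
  {F | ∀ i < 2 ^ n,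
    muM (Pelt F.f n i ∩ Itilde b₁ b₂) / muM (Pelt F.f n i) < 1 / (m : ℝ≥0∞) ∨
    1 - 1 / (m : ℝ≥0∞) < muM (Pelt F.f n i ∩ Itilde b₁ b₂) / muM (Pelt F.f n i)}

/-- The set `B_{m,I}`. -/
def Bset (C γ : ℝ) (m : ℕ) (b₁ b₂ : ℝ) : Set (Fol C γ) := ⋃ n : ℕ, Aset C γ n m b₁ b₂

/-- The leaf measure `λ_y`: pushforward of 1-dimensional Lebesgue measure on `[0,1]`
under `x ↦ (x, f(x,y))`. -/
def leafMeas {C γ : ℝ} (F : Fol C γ) (y : ℝ) : Measure (ℝ × ℝ) :=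
  (volume.restrict unitInterval).map fun x => (x, F.f x y)

/-!
For a rational `q > 0` and `ε > 0`, consider the foliations for which the strip `{x ≤ q}` is within
`ε` of a union of leaves, in the sense that its indicator is `ε`-close in `L¹` to a continuous
function of the leaf label. These form an open set. A foliation lying in all of them gives
`{x ≤ q}` conditional measure `0` or `1` on almost every leaf, for every `q`, which forces the
conditional measures to be Dirac masses.

Density: a foliation `f` can first be made bi-Lipschitz in `y`, with a Hölder constant below `C`.
Fix a fine partition of the labels into intervals with lower and upper halves, and for each `x`
precompose `f(x, ·)` with a piecewise linear map `z_x` of every interval: for `x < q` it squeezes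
the upper halves to a tiny proportion `σ`, for `x > q` the lower halves. Then the leaves labelled by
lower halves fill almost all of `{x < q}` and almost nothing of `{x > q}`. As the partition gets
finer, `z_x` tends to the identity uniformly, together with its `x`-derivative; since
the perturbed maps are Lipschitz with fixed constants, the `(C, β)`-bi-Hölder bounds and the `d_α`
distance are controlled by interpolation between the Lipschitz bounds and uniform closeness.
-/

section Increments

lemma exists_forall_mul_rpow_le {A B p q : ℝ} (hB : 0 < B) (hq : 0 ≤ q) (hqp : q < p) :
    ∃ c > 0, ∀ s ∈ Icc 0 c, A * s ^ p ≤ B * s ^ q := by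
  have hpq : 0 < p - q := sub_pos.2 hqp
  have hcont : Continuous fun s : ℝ => A * s ^ (p - q) :=
    continuous_const.mul (Real.continuous_rpow_const hpq.le)
  have hev : ∀ᶠ s in 𝓝 (0 : ℝ), A * s ^ (p - q) < B :=
    hcont.continuousAt.eventually_lt_const (by simpa [Real.zero_rpow hpq.ne'] using hB)
  obtain ⟨c, hc, hball⟩ := Metric.nhds_basis_closedBall.eventually_iff.1 hev
  refine ⟨c, hc, fun s hs => ?_⟩
  have hsc : A * s ^ (p - q) < B := hball (by simpa [abs_of_nonneg hs.1] using hs.2)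
  calc A * s ^ p = A * s ^ (p - q) * s ^ q := by
        rw [mul_assoc, ← Real.rpow_add_of_nonneg hs.1 hpq.le hq, sub_add_cancel]
    _ ≤ B * s ^ q := mul_le_mul_of_nonneg_right hsc.le (Real.rpow_nonneg hs.1 q)

/-- On the unit interval, the increments of `h` lie between the moduli `lo` and `hi`. Increments are
signed, so that a nonnegative `lo` makes `h` monotone. -/
def IncrementsIn (lo hi h : ℝ → ℝ) : Prop :=
  ∀ y ∈ unitInterval, ∀ z ∈ unitInterval, y ≤ z → h z - h y ∈ Icc (lo (z - y)) (hi (z - y))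

namespace IncrementsIn

variable {lo hi g h : ℝ → ℝ}

lemma mapsTo (hh : IncrementsIn lo hi h) (hlo : ∀ s, 0 ≤ s → 0 ≤ lo s) (h0 : h 0 = 0)
    (h1 : h 1 = 1) : MapsTo h unitInterval unitInterval := by
  intro y hy
  have h0y := (hh 0 unitInterval.zero_mem y hy hy.1).1
  have hy1 := (hh y hy 1 unitInterval.one_mem hy.2).1
  have := hlo (y - 0) (by linarith [hy.1])
  have := hlo (1 - y) (by linarith [hy.2])
  exact ⟨by linarith, by linarith⟩

lemma abs_sub_le (hh : IncrementsIn lo hi h) (hlo : ∀ s, 0 ≤ s → 0 ≤ lo s) {y z : ℝ}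
    (hy : y ∈ unitInterval) (hz : z ∈ unitInterval) : |h z - h y| ≤ hi |z - y| := by
  rcases le_total y z with hyz | hzy
  · have := hh y hy z hz hyz
    rw [abs_of_nonneg ((hlo _ (sub_nonneg.2 hyz)).trans this.1), abs_of_nonneg (sub_nonneg.2 hyz)]
    exact this.2
  · have := hh z hz y hy hzy
    rw [abs_sub_comm, abs_sub_comm z,
      abs_of_nonneg ((hlo _ (sub_nonneg.2 hzy)).trans this.1), abs_of_nonneg (sub_nonneg.2 hzy)]
    exact this.2

lemma le_abs_sub (hh : IncrementsIn lo hi h) {y z : ℝ}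
    (hy : y ∈ unitInterval) (hz : z ∈ unitInterval) : lo |z - y| ≤ |h z - h y| := by
  rcases le_total y z with hyz | hzy
  · rw [abs_of_nonneg (sub_nonneg.2 hyz)]
    exact (hh y hy z hz hyz).1.trans (le_abs_self _)
  · rw [abs_sub_comm z, abs_sub_comm (h z), abs_of_nonneg (sub_nonneg.2 hzy)]
    exact (hh z hz y hy hzy).1.trans (le_abs_self _)

lemma convexComb {t : ℝ} (ht : t ∈ unitInterval) (hg : IncrementsIn lo hi g)
    (hh : IncrementsIn lo hi h) : IncrementsIn lo hi fun y => (1 - t) * g y + t * h y := by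
  intro y hy z hz hyz
  have := convex_Icc _ _ (hg y hy z hz hyz) (hh y hy z hz hyz) (sub_nonneg.2 ht.2) ht.1
    (sub_add_cancel 1 t)
  simp only [smul_eq_mul] at this
  convert this using 1
  ring

lemma comp_linear {l L m K : ℝ} (hl : 0 ≤ l) (hm : 0 ≤ m) (hL : 0 ≤ L)
    (hh : IncrementsIn (l * ·) (L * ·) h) (hg : IncrementsIn (m * ·) (K * ·) g)
    (hmaps : MapsTo g unitInterval unitInterval) :
    IncrementsIn (l * m * ·) (L * K * ·) fun y => h (g y) := by
  intro y hy z hz hyz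
  obtain ⟨hg₁, hg₂⟩ := hg y hy z hz hyz
  have hgyz : g y ≤ g z := sub_nonneg.1 ((mul_nonneg hm (sub_nonneg.2 hyz)).trans hg₁)
  obtain ⟨hh₁, hh₂⟩ := hh _ (hmaps hy) _ (hmaps hz) hgyz
  simp only [mul_assoc]
  exact ⟨(mul_le_mul_of_nonneg_left hg₁ hl).trans hh₁,
    hh₂.trans (mul_le_mul_of_nonneg_left hg₂ hL)⟩

end IncrementsIn

/-- Uniform `ε`-closeness on the unit square. -/
def UnifClose (ε : ℝ) (u v : ℝ → ℝ → ℝ) : Prop :=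
  ∀ x ∈ unitInterval, ∀ y ∈ unitInterval, |u x y - v x y| ≤ ε

lemma UnifClose.trans {δ ε : ℝ} {u v w : ℝ → ℝ → ℝ} (huv : UnifClose δ u v)
    (hvw : UnifClose ε v w) : UnifClose (δ + ε) u w := fun x hx y hy =>
  (abs_sub_le _ _ _).trans (add_le_add (huv x hx y hy) (hvw x hx y hy))

end Increments

section Foliations

variable {C β : ℝ} {f fx : ℝ → ℝ → ℝ} {x y z : ℝ}

namespace IsFol

lemma abs_sub_le (hf : IsFol C β f fx) (hC : 0 ≤ C) (hx : x ∈ unitInterval)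
    (hy : y ∈ unitInterval) (hz : z ∈ unitInterval) : |f x z - f x y| ≤ C * |z - y| ^ β := by
  rcases eq_or_ne y z with rfl | hyz
  · simpa using mul_nonneg hC (Real.rpow_nonneg le_rfl β)
  · exact hf.upper x hx y hy z hz hyz

lemma continuousOn_slice (hf : IsFol C β f fx) (hC : 0 ≤ C) (hβ : 0 < β)
    (hx : x ∈ unitInterval) : ContinuousOn (f x) unitInterval := by
  intro y hy
  have hmod : Continuous fun z : ℝ => C * |z - y| ^ β := by
    fun_prop (disch := exact hβ.le)
  have hlim : Tendsto (fun z : ℝ => C * |z - y| ^ β) (𝓝[unitInterval] y) (𝓝 0) :=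
    (hmod.tendsto' y 0 (by simp [Real.zero_rpow hβ.ne'])).mono_left nhdsWithin_le_nhds
  refine tendsto_iff_dist_tendsto_zero.2 (squeeze_zero' (.of_forall fun _ => dist_nonneg) ?_ hlim)
  filter_upwards [self_mem_nhdsWithin] with z hz using hf.abs_sub_le hC hx hy hz

lemma injOn (hf : IsFol C β f fx) (hC : 0 < C) (hx : x ∈ unitInterval) :
    InjOn (f x) unitInterval := by
  intro y hy z hz hyz
  by_contra hne
  have hlow := hf.lower x hx y hy z hz hne
  have hpos : 0 < |z - y| := abs_pos.2 (sub_ne_zero.2 (Ne.symm hne))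
  rw [hyz, sub_self, abs_zero] at hlow
  exact hlow.not_gt (by positivity)

lemma strictMonoOn (hf : IsFol C β f fx) (hC : 0 < C) (hβ : 0 < β) (hx : x ∈ unitInterval) :
    StrictMonoOn (f x) unitInterval :=
  ContinuousOn.strictMonoOn_of_injOn_Icc zero_le_one
    (by rw [hf.eq_bot x hx, hf.eq_top x hx]; exact zero_le_one)
    (hf.continuousOn_slice hC.le hβ hx) (hf.injOn hC hx)

lemma incrementsIn (hf : IsFol C β f fx) (hC : 0 < C) (hβ : 0 < β) (hx : x ∈ unitInterval) :
    IncrementsIn (fun s => C⁻¹ * s ^ (1 / β)) (fun s => C * s ^ β) (f x) := by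
  intro y hy z hz hyz
  have hlow : C⁻¹ * |z - y| ^ (1 / β) ≤ |f x z - f x y| := by
    rcases eq_or_ne y z with rfl | hne
    · simp [Real.zero_rpow (inv_ne_zero hβ.ne')]
    · exact hf.lower x hx y hy z hz hne
  have hupp := hf.abs_sub_le hC.le hx hy hz
  rw [abs_of_nonneg (sub_nonneg.2 hyz),
    abs_of_nonneg (sub_nonneg.2 ((hf.strictMonoOn hC hβ hx).monotoneOn hy hz hyz))] at hlow hupp
  exact ⟨hlow, hupp⟩

lemma surjOn (hf : IsFol C β f fx) (hC : 0 ≤ C) (hβ : 0 < β) (hx : x ∈ unitInterval) :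
    SurjOn (f x) unitInterval unitInterval := by
  have := intermediate_value_Icc zero_le_one (hf.continuousOn_slice hC hβ hx)
  rwa [hf.eq_bot x hx, hf.eq_top x hx] at this

lemma hinv_mem (hf : IsFol C β f fx) (hC : 0 ≤ C) (hβ : 0 < β) (hx : x ∈ unitInterval)
    (hz : z ∈ unitInterval) : hinv f x z ∈ unitInterval :=
  Function.invFunOn_mem (hf.surjOn hC hβ hx hz)

lemma apply_hinv (hf : IsFol C β f fx) (hC : 0 ≤ C) (hβ : 0 < β) (hx : x ∈ unitInterval)
    (hz : z ∈ unitInterval) : f x (hinv f x z) = z :=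
  Function.invFunOn_eq (hf.surjOn hC hβ hx hz)

lemma hinv_apply (hf : IsFol C β f fx) (hC : 0 < C) (hx : x ∈ unitInterval)
    (hy : y ∈ unitInterval) : hinv f x (f x y) = y :=
  (hf.injOn hC hx).leftInvOn_invFunOn hy

lemma abs_hinv_sub_le (hf : IsFol C β f fx) (hC : 0 < C) (hβ : 0 < β) (hx : x ∈ unitInterval)
    (hy : y ∈ unitInterval) (hz : z ∈ unitInterval) :
    |hinv f x z - y| ≤ (C * |z - f x y|) ^ β := by
  have hlow := (hf.incrementsIn hC hβ hx).le_abs_sub hy (hf.hinv_mem hC.le hβ hx hz)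
  rw [hf.apply_hinv hC.le hβ hx hz, inv_mul_le_iff₀ hC] at hlow
  calc |hinv f x z - y| = (|hinv f x z - y| ^ (1 / β)) ^ β := by
        rw [← Real.rpow_mul (abs_nonneg _), one_div_mul_cancel hβ.ne', Real.rpow_one]
    _ ≤ (C * |z - f x y|) ^ β := by gcongr

lemma abs_hinv_sub_hinv_le (hf : IsFol C β f fx) (hC : 1 ≤ C) (hβ : 0 < β) (hβ₁ : β ≤ 1)
    (hx : x ∈ unitInterval) (hy : y ∈ unitInterval) (hz : z ∈ unitInterval) :
    |hinv f x z - hinv f x y| ≤ C * |z - y| ^ β := by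
  have hC₀ : 0 < C := one_pos.trans_le hC
  have h := hf.abs_hinv_sub_le hC₀ hβ hx (hf.hinv_mem hC₀.le hβ hx hy) hz
  rw [hf.apply_hinv hC₀.le hβ hx hy, Real.mul_rpow hC₀.le (abs_nonneg _)] at h
  exact h.trans (mul_le_mul_of_nonneg_right (Real.rpow_le_self_of_one_le hC hβ₁)
    (Real.rpow_nonneg (abs_nonneg _) β))

lemma continuousOn_projF (hf : IsFol C β f fx) (hC : 0 < C) (hβ : 0 < β) :
    ContinuousOn (projF f) MSq := by
  rintro ⟨x, z⟩ ⟨hx, hz⟩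
  set y := hinv f x z
  have hy : y ∈ unitInterval := hf.hinv_mem hC.le hβ hx hz
  have hleaf : ContinuousWithinAt (fun p : ℝ × ℝ => f p.1 y) MSq (x, z) :=
    ContinuousWithinAt.comp (g := fun x' => f x' y) (t := unitInterval)
      (hf.hasDeriv y hy x hx).continuousWithinAt continuousWithinAt_fst fun _ hp => hp.1
  have hmod : ContinuousWithinAt (fun p : ℝ × ℝ => (C * |p.2 - f p.1 y|) ^ β) MSq (x, z) :=
    ((continuousWithinAt_snd.sub hleaf).abs.const_mul C).rpow_const (.inr hβ.le)
  have hlim : Tendsto (fun p : ℝ × ℝ => (C * |p.2 - f p.1 y|) ^ β) (𝓝[MSq] (x, z)) (𝓝 0) := by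
    simpa [y, hf.apply_hinv hC.le hβ hx hz, Real.zero_rpow hβ.ne'] using hmod.tendsto
  refine tendsto_iff_dist_tendsto_zero.2 (squeeze_zero' (.of_forall fun _ => dist_nonneg) ?_ hlim)
  filter_upwards [self_mem_nhdsWithin] with p hp
  exact hf.abs_hinv_sub_le hC hβ hp.1 hy hp.2

end IsFol

lemma volume_unitInterval : volume unitInterval = 1 := by simp [unitInterval]

lemma measurableSet_MSq : MeasurableSet MSq := measurableSet_Icc.prod measurableSet_Icc

instance : IsProbabilityMeasure muM := ⟨by
  rw [muM, Measure.restrict_apply_univ, MSq, Measure.volume_eq_prod, Measure.prod_prod,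
    volume_unitInterval, one_mul]⟩

lemma Fol.aemeasurable_projF (hC : 0 < C) (hβ : 0 < β) (F : Fol C β) :
    AEMeasurable (projF F.f) muM :=
  (F.isFol.continuousOn_projF hC hβ).aemeasurable measurableSet_MSq

lemma Fol.isProbabilityMeasure_quotM (hC : 0 < C) (hβ : 0 < β) (F : Fol C β) :
    IsProbabilityMeasure (quotM F) :=
  Measure.isProbabilityMeasure_map (F.aemeasurable_projF hC hβ)

end Foliations

section Distance

variable {C α β ε : ℝ}

lemma exists_forall_mul_rpow_le_const (hC : 0 ≤ C) (hβ : 0 < β) (hε : 0 < ε) :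
    ∃ c > 0, ∀ s ∈ Icc 0 c, (C * s) ^ β ≤ ε := by
  obtain ⟨c, hc, h⟩ := exists_forall_mul_rpow_le (A := C ^ β) hε le_rfl hβ
  exact ⟨c, hc, fun s hs => by simpa [Real.mul_rpow hC hs.1] using h s hs⟩

lemma C0dist_nonneg (u v : ℝ → ℝ → ℝ) : 0 ≤ C0dist u v :=
  Real.sSup_nonneg fun _ ⟨_, _, _, _, hr⟩ => hr ▸ abs_nonneg _

lemma UnifClose.C0dist_le {u v : ℝ → ℝ → ℝ} (huv : UnifClose ε u v) (hε : 0 ≤ ε) :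
    C0dist u v ≤ ε :=
  Real.sSup_le (fun _ ⟨x, hx, y, hy, hr⟩ => hr ▸ huv x hx y hy) hε

lemma holDist_nonneg (h k : ℝ → ℝ) : 0 ≤ holDist α h k :=
  Real.sSup_nonneg fun _ ⟨_, _, _, _, _, hr⟩ => hr ▸ by positivity

lemma exists_holDist_le (hα : 0 ≤ α) (hαβ : α < β) (hε : 0 < ε) :
    ∃ δ > 0, ∀ h k : ℝ → ℝ,
      (∀ y ∈ unitInterval, ∀ z ∈ unitInterval, |h z - h y| ≤ C * |z - y| ^ β) →
      (∀ y ∈ unitInterval, ∀ z ∈ unitInterval, |k z - k y| ≤ C * |z - y| ^ β) →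
      (∀ z ∈ unitInterval, |h z - k z| ≤ δ) → holDist α h k ≤ ε := by
  obtain ⟨c, hc, hsmall⟩ := exists_forall_mul_rpow_le (A := 2 * C) hε hα hαβ
  refine ⟨ε * c ^ α / 2, by positivity, fun h k hh hk hhk => Real.sSup_le ?_ hε.le⟩
  rintro _ ⟨y, hy, z, hz, hyz, rfl⟩
  have hpos : 0 < |z - y| := abs_pos.2 (sub_ne_zero.2 (Ne.symm hyz))
  rw [div_le_iff₀ (by positivity)]
  rcases le_total |z - y| c with hle | hge
  · calc |(h z - k z) - (h y - k y)| = |(h z - h y) - (k z - k y)| := by ring_nf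
      _ ≤ |h z - h y| + |k z - k y| := abs_sub _ _
      _ ≤ 2 * C * |z - y| ^ β := by linarith [hh y hy z hz, hk y hy z hz]
      _ ≤ ε * |z - y| ^ α := hsmall _ ⟨hpos.le, hle⟩
  · calc |(h z - k z) - (h y - k y)| ≤ |h z - k z| + |h y - k y| := abs_sub _ _
      _ ≤ ε * c ^ α := by linarith [hhk y hy, hhk z hz]
      _ ≤ ε * |z - y| ^ α := by gcongr

lemma IsFol.unifClose_hinv {f fx g gx : ℝ → ℝ → ℝ} (hC : 0 < C) (hβ : 0 < β)
    (hf : IsFol C β f fx) (hg : IsFol C β g gx) (hgf : UnifClose ε g f) :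
    UnifClose ((C * ε) ^ β) (hinv g) (hinv f) := by
  intro x hx z hz
  have hy := hg.hinv_mem hC.le hβ hx hz
  have hclose := hgf x hx _ hy
  rw [hg.apply_hinv hC.le hβ hx hz] at hclose
  rw [abs_sub_comm]
  exact (hf.abs_hinv_sub_le hC hβ hx hy hz).trans (by gcongr)

namespace Fol

lemma unifClose_dalphaF (F G : Fol C β) : UnifClose (dalphaF α G F) G.f F.f := by
  intro x hx y hy
  have hbdd : BddAbove {r | ∃ x ∈ unitInterval, ∃ y ∈ unitInterval, r = |G.f x y - F.f x y|} := by
    refine ⟨1, ?_⟩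
    rintro _ ⟨x, hx, y, hy, rfl⟩
    exact Real.dist_le_of_mem_Icc_01 (G.isFol.mapsTo x hx y hy) (F.isFol.mapsTo x hx y hy)
  have hsup : 0 ≤ sSup {r | ∃ x ∈ unitInterval,
      r = max (holDist α (G.f x) (F.f x)) (holDist α (hinv G.f x) (hinv F.f x))} :=
    Real.sSup_nonneg fun _ ⟨_, _, hr⟩ => hr ▸ le_max_of_le_left (holDist_nonneg _ _)
  calc |G.f x y - F.f x y| ≤ C0dist G.f F.f := le_csSup hbdd ⟨x, hx, y, hy, rfl⟩
    _ ≤ dalphaF α G F := by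
        rw [dalphaF, dalpha, add_assoc]
        exact le_add_of_nonneg_right (add_nonneg (C0dist_nonneg _ _) hsup)

lemma exists_dalphaF_lt (hC : 1 ≤ C) (hα : 0 ≤ α) (hαβ : α < β) (hβ : β ≤ 1) (hε : 0 < ε) :
    ∃ δ > 0, ∀ F G : Fol C β,
      UnifClose δ G.f F.f → UnifClose δ G.fx F.fx → dalphaF α G F < ε := by
  have hC₀ : 0 < C := one_pos.trans_le hC
  have hβ₀ : 0 < β := hα.trans_lt hαβ
  obtain ⟨δ₁, hδ₁, hhol⟩ :=
    exists_holDist_le (C := C) hα hαβ (by positivity : 0 < ε / 4)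
  obtain ⟨δ₂, hδ₂, hinvol⟩ := exists_forall_mul_rpow_le_const hC₀.le hβ₀ hδ₁
  set δ := min (ε / 4) (min δ₁ δ₂)
  have hδ : 0 < δ := by positivity
  have hδε : δ ≤ ε / 4 := min_le_left _ _
  have hδδ₁ : δ ≤ δ₁ := (min_le_right _ _).trans (min_le_left _ _)
  have hδδ₂ : δ ≤ δ₂ := (min_le_right _ _).trans (min_le_right _ _)
  refine ⟨δ, hδ, fun F G hf hfx => ?_⟩
  have hslices : sSup {r | ∃ x ∈ unitInterval,
      r = max (holDist α (G.f x) (F.f x)) (holDist α (hinv G.f x) (hinv F.f x))} ≤ ε / 4 := by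
    refine Real.sSup_le ?_ (by positivity)
    rintro _ ⟨x, hx, rfl⟩
    refine max_le (hhol _ _ (fun y hy z => G.isFol.abs_sub_le hC₀.le hx hy)
      (fun y hy z => F.isFol.abs_sub_le hC₀.le hx hy) fun z hz => (hf x hx z hz).trans hδδ₁) ?_
    refine hhol _ _ (fun y hy z => G.isFol.abs_hinv_sub_hinv_le hC hβ₀ hβ hx hy)
      (fun y hy z => F.isFol.abs_hinv_sub_hinv_le hC hβ₀ hβ hx hy) fun z hz => ?_
    exact (F.isFol.unifClose_hinv hC₀ hβ₀ G.isFol hf x hx z hz).trans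
      (hinvol δ ⟨hδ.le, hδδ₂⟩)
  calc dalphaF α G F ≤ ε / 4 + ε / 4 + ε / 4 :=
        add_le_add (add_le_add ((hf.C0dist_le hδ.le).trans hδε) ((hfx.C0dist_le hδ.le).trans hδε))
          hslices
    _ < ε := by linarith

end Fol

end Distance

section LinearInterpolation

variable {N : ℕ} {a : ℕ → ℝ} {H : ℝ → ℝ}

/-- The piecewise linear function on `[0, N]` taking the value `a i` at each node `i ≤ N`, written
as a combination of hat functions so that it depends linearly on `a`. -/
def linInterp (N : ℕ) (a : ℕ → ℝ) (t : ℝ) : ℝ :=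
  ∑ i ∈ Finset.range (N + 1), max 0 (1 - |t - i|) * a i

lemma linInterp_add {j : ℕ} (hj : j < N) {θ : ℝ} (hθ : θ ∈ unitInterval) :
    linInterp N a (j + θ) = (1 - θ) * a j + θ * a (j + 1) := by
  obtain ⟨hθ₀, hθ₁⟩ := hθ
  have hleft : max 0 (1 - |(j : ℝ) + θ - j|) = 1 - θ := by
    rw [add_sub_cancel_left, abs_of_nonneg hθ₀, max_eq_right (by linarith)]
  have hright : max 0 (1 - |(j : ℝ) + θ - (j + 1 : ℕ)|) = θ := by
    rw [Nat.cast_add_one, abs_of_nonpos (by linarith), max_eq_right (by linarith)]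
    ring
  rw [linInterp, Finset.sum_eq_add_of_mem j (j + 1) (by simp; omega) (by simp; omega) (by omega),
    hleft, hright]
  rintro i - ⟨hij, hij'⟩
  have hfar : 1 ≤ |(j : ℝ) + θ - i| := by
    rcases lt_or_gt_of_ne hij with hlt | hgt
    · have : (i : ℝ) + 1 ≤ j := by exact_mod_cast hlt
      exact le_trans (by linarith) (le_abs_self _)
    · have : (j : ℝ) + 2 ≤ i := by exact_mod_cast (by omega : j + 2 ≤ i)
      exact le_trans (by linarith) (neg_le_abs _)
  rw [max_eq_left (sub_nonpos.2 hfar), zero_mul]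

lemma exists_eq_natCast_add (hN : 0 < N) {t : ℝ} (ht : t ∈ Icc 0 (N : ℝ)) :
    ∃ j < N, ∃ θ ∈ unitInterval, t = j + θ := by
  rcases ht.2.eq_or_lt with rfl | hlt
  · exact ⟨N - 1, by omega, 1, unitInterval.one_mem, by rw [Nat.cast_pred hN]; ring⟩
  · exact ⟨⌊t⌋₊, (Nat.floor_lt ht.1).2 hlt, t - ⌊t⌋₊, ⟨sub_nonneg.2 (Nat.floor_le ht.1),
      by linarith [Nat.lt_floor_add_one t]⟩, by ring⟩

lemma convexComb_le_of_concaveOn (hH : ConcaveOn ℝ (Ici 0) H) {A B u v θ : ℝ} (hu : 0 ≤ u)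
    (hv : 0 ≤ v) (hA : A ≤ H u) (hB : B ≤ H v) (hθ : θ ∈ unitInterval) :
    (1 - θ) * A + θ * B ≤ H ((1 - θ) * u + θ * v) :=
  (add_le_add (mul_le_mul_of_nonneg_left hA (sub_nonneg.2 hθ.2))
    (mul_le_mul_of_nonneg_left hB hθ.1)).trans
    (hH.2 hu hv (sub_nonneg.2 hθ.2) hθ.1 (sub_add_cancel 1 θ))

lemma linInterp_sub_node_le (hH : ConcaveOn ℝ (Ici 0) H)
    (ha : ∀ i j : ℕ, i ≤ j → j ≤ N → a j - a i ≤ H (j - i)) {k j : ℕ} (hkj : k ≤ j) (hj : j < N)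
    {θ : ℝ} (hθ : θ ∈ unitInterval) : linInterp N a (j + θ) - a k ≤ H (j + θ - k) := by
  have hkj' : (k : ℝ) ≤ j := by exact_mod_cast hkj
  have hnext : a (j + 1) - a k ≤ H (j + 1 - k) := by
    exact_mod_cast ha k (j + 1) (by omega) hj
  calc linInterp N a (j + θ) - a k = (1 - θ) * (a j - a k) + θ * (a (j + 1) - a k) := by
        rw [linInterp_add hj hθ]; ring
    _ ≤ H ((1 - θ) * (j - k) + θ * (j + 1 - k)) :=
        convexComb_le_of_concaveOn hH (by linarith) (by linarith) (ha k j hkj hj.le) hnext hθ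
    _ = H (j + θ - k) := by ring_nf

lemma linInterp_sub_le_of_same_cell (hH : ConcaveOn ℝ (Ici 0) H) (hH₀ : H 0 = 0) {j : ℕ}
    (hj : j < N) (ha : a (j + 1) - a j ≤ H 1) {η θ : ℝ} (hη : η ∈ unitInterval)
    (hθ : θ ∈ unitInterval) (hηθ : η ≤ θ) :
    linInterp N a (j + θ) - linInterp N a (j + η) ≤ H (θ - η) := by
  have hmem : θ - η ∈ unitInterval := ⟨sub_nonneg.2 hηθ, by linarith [hη.1, hθ.2]⟩
  calc linInterp N a (j + θ) - linInterp N a (j + η)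
      = (1 - (θ - η)) * 0 + (θ - η) * (a (j + 1) - a j) := by
        rw [linInterp_add hj hθ, linInterp_add hj hη]; ring
    _ ≤ H ((1 - (θ - η)) * 0 + (θ - η) * 1) :=
        convexComb_le_of_concaveOn hH le_rfl zero_le_one hH₀.ge ha hmem
    _ = H (θ - η) := by ring_nf

lemma linInterp_sub_le (hN : 0 < N) (hH : ConcaveOn ℝ (Ici 0) H) (hH₀ : H 0 = 0)
    (ha : ∀ i j : ℕ, i ≤ j → j ≤ N → a j - a i ≤ H (j - i)) {s t : ℝ} (hs : s ∈ Icc 0 (N : ℝ))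
    (ht : t ∈ Icc 0 (N : ℝ)) (hst : s ≤ t) : linInterp N a t - linInterp N a s ≤ H (t - s) := by
  obtain ⟨i, hi, η, hη, rfl⟩ := exists_eq_natCast_add hN hs
  obtain ⟨j, hj, θ, hθ, rfl⟩ := exists_eq_natCast_add hN ht
  rcases lt_trichotomy i j with hij | rfl | hji
  · have hij' : (i : ℝ) + 1 ≤ j := by exact_mod_cast hij
    have hright := linInterp_sub_node_le hH ha hij.le hj hθ
    have hleft : linInterp N a (j + θ) - a (i + 1) ≤ H (j + θ - (i + 1)) := by
      exact_mod_cast linInterp_sub_node_le hH ha hij hj hθ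
    calc linInterp N a (j + θ) - linInterp N a (i + η)
        = (1 - η) * (linInterp N a (j + θ) - a i) +
            η * (linInterp N a (j + θ) - a (i + 1)) := by
          rw [linInterp_add hi hη]; ring
      _ ≤ H ((1 - η) * (j + θ - i) + η * (j + θ - (i + 1))) :=
          convexComb_le_of_concaveOn hH (by linarith [hθ.1]) (by linarith [hθ.1]) hright hleft hη
      _ = H (j + θ - (i + η)) := by ring_nf
  · have hstep : a (i + 1) - a i ≤ H 1 := by simpa using ha i (i + 1) (by omega) hi
    rw [add_sub_add_left_eq_sub]
    exact linInterp_sub_le_of_same_cell hH hH₀ hi hstep hη hθ (by linarith)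
  · have hji' : (j : ℝ) + 1 ≤ i := by exact_mod_cast hji
    have heq : (i : ℝ) + η = j + θ := le_antisymm hst (by linarith [hη.1, hθ.2])
    rw [heq, sub_self, sub_self, hH₀]

lemma linInterp_neg (t : ℝ) : linInterp N (fun i => -a i) t = -linInterp N a t := by
  simp only [linInterp, mul_neg, Finset.sum_neg_distrib]

/-- The piecewise linear interpolation of `p : [0, 1] → ℝ` at the nodes `i / N`. -/
def gridInterp (N : ℕ) (p : ℝ → ℝ) (y : ℝ) : ℝ := linInterp N (fun i => p (i / N)) (N * y)

variable {p : ℝ → ℝ} {y : ℝ}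

lemma natCast_mul_mem_Icc (hy : y ∈ unitInterval) : N * y ∈ Icc 0 (N : ℝ) :=
  ⟨mul_nonneg N.cast_nonneg hy.1, mul_le_of_le_one_right N.cast_nonneg hy.2⟩

lemma natCast_div_mem_unitInterval {i : ℕ} (hi : i ≤ N) : (i : ℝ) / N ∈ unitInterval :=
  unitInterval.div_mem i.cast_nonneg N.cast_nonneg (by exact_mod_cast hi)

lemma incrementsIn_gridInterp {lo hi : ℝ → ℝ} (hN : 0 < N) (hlo : ConvexOn ℝ (Ici 0) lo)
    (hhi : ConcaveOn ℝ (Ici 0) hi) (hlo₀ : lo 0 = 0) (hhi₀ : hi 0 = 0)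
    (hp : ∀ i j : ℕ, i ≤ j → j ≤ N →
      p (j / N) - p (i / N) ∈ Icc (lo (j / N - i / N)) (hi (j / N - i / N))) :
    IncrementsIn lo hi (gridInterp N p) := by
  intro y hy z hz hyz
  have hN' : (0 : ℝ) < N := by exact_mod_cast hN
  have hscale {K : ℝ → ℝ} (hK : ConcaveOn ℝ (Ici 0) K) :
      ConcaveOn ℝ (Ici 0) fun s => K (s / N) := by
    refine ((hK.comp_linearMap (LinearMap.mulRight ℝ (N : ℝ)⁻¹)).subset ?_ (convex_Ici 0))
    exact fun s (hs : 0 ≤ s) => mul_nonneg hs (inv_nonneg.2 hN'.le)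
  have hyz' : (N : ℝ) * y ≤ N * z := mul_le_mul_of_nonneg_left hyz hN'.le
  have hdiv : (N * z - N * y) / (N : ℝ) = z - y := by field_simp
  have hy' := natCast_mul_mem_Icc (N := N) hy
  have hz' := natCast_mul_mem_Icc (N := N) hz
  have hupp := linInterp_sub_le hN (hscale hhi) (by simpa using hhi₀) (a := fun i => p (i / N))
    (fun i j hij hj => by simpa only [sub_div] using (hp i j hij hj).2) hy' hz' hyz'
  have hlow := linInterp_sub_le hN (hscale hlo.neg) (by simpa using hlo₀)
    (a := fun i => -p (i / N))
    (fun i j hij hj => by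
      simp only [Pi.neg_apply, sub_div]
      linarith [(hp i j hij hj).1]) hy' hz' hyz'
  simp only [linInterp_neg, Pi.neg_apply, hdiv] at hupp hlow
  exact ⟨by rw [gridInterp, gridInterp]; linarith, hupp⟩

lemma exists_gridInterp_eq (hN : 0 < N) (hy : y ∈ unitInterval) :
    ∃ j < N, ∃ θ ∈ unitInterval, y = (j + θ) / N ∧
      ∀ p : ℝ → ℝ, gridInterp N p y = (1 - θ) * p (j / N) + θ * p ((j + 1) / N) := by
  have hN' : (N : ℝ) ≠ 0 := by exact_mod_cast hN.ne'
  obtain ⟨j, hj, θ, hθ, h⟩ := exists_eq_natCast_add hN (natCast_mul_mem_Icc hy)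
  refine ⟨j, hj, θ, hθ, by rw [← h]; field_simp, fun p => ?_⟩
  rw [gridInterp, h, linInterp_add hj hθ, Nat.cast_add_one]

lemma abs_gridInterp_sub_le {ε : ℝ} (hN : 0 < N) (hy : y ∈ unitInterval)
    (hp : ∀ z ∈ unitInterval, |z - y| ≤ 1 / N → |p z - p y| ≤ ε) :
    |gridInterp N p y - p y| ≤ ε := by
  have hN' : (0 : ℝ) < N := by exact_mod_cast hN
  obtain ⟨j, hj, θ, hθ, rfl, hgrid⟩ := exists_gridInterp_eq hN hy
  have hnear {u : ℝ} (hu : |u - (j + θ)| ≤ 1) : |u / N - (j + θ) / N| ≤ 1 / N := by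
    rw [← sub_div, abs_div, abs_of_pos hN']
    gcongr
  have hleft := hp _ (natCast_div_mem_unitInterval hj.le)
    (hnear (by rw [abs_le]; constructor <;> linarith [hθ.1, hθ.2]))
  have hright := hp ((j + 1) / N) (by exact_mod_cast natCast_div_mem_unitInterval hj)
    (hnear (by rw [abs_le]; constructor <;> linarith [hθ.1, hθ.2]))
  have := convex_Icc (-ε) ε (abs_le.1 hleft) (abs_le.1 hright) (sub_nonneg.2 hθ.2) hθ.1
    (sub_add_cancel 1 θ)
  rw [hgrid, abs_le, ← mem_Icc]
  convert this using 1
  simp only [smul_eq_mul]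
  ring

lemma gridInterp_zero (hN : 0 < N) (p : ℝ → ℝ) : gridInterp N p 0 = p 0 := by
  simpa [gridInterp] using linInterp_add (a := fun i => p (i / N)) hN unitInterval.zero_mem

lemma gridInterp_one (hN : 0 < N) (p : ℝ → ℝ) : gridInterp N p 1 = p 1 := by
  have hN' : (N : ℝ) ≠ 0 := by exact_mod_cast hN.ne'
  have h := linInterp_add (a := fun i => p (i / N)) (Nat.sub_lt hN one_pos) unitInterval.one_mem
  simpa [gridInterp, Nat.cast_pred hN, Nat.sub_add_cancel hN, div_self hN'] using h

lemma gridInterp_id (hN : 0 < N) (hp : ∀ z ∈ unitInterval, p z = z) (hy : y ∈ unitInterval) :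
    gridInterp N p y = y := by
  obtain ⟨j, hj, θ, -, rfl, hgrid⟩ := exists_gridInterp_eq hN hy
  rw [hgrid, hp _ (natCast_div_mem_unitInterval hj.le),
    hp ((j + 1) / N) (by exact_mod_cast natCast_div_mem_unitInterval hj)]
  ring

end LinearInterpolation

section Regularisation

variable {C C₁ C₂ β ε t : ℝ} {f fx g gx u v : ℝ → ℝ → ℝ}

/-- A family `f x` of functions on the unit interval, continuous on the square and continuously
differentiable in the parameter `x`, with derivative `fx`. -/
structure IsC1Family (f fx : ℝ → ℝ → ℝ) : Prop where
  hasDeriv : ∀ y ∈ unitInterval, ∀ x ∈ unitInterval,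
    HasDerivWithinAt (fun x' => f x' y) (fx x y) unitInterval x
  continuousOn : ContinuousOn (fun p : ℝ × ℝ => f p.1 p.2) MSq
  derivCont : ContinuousOn (fun p : ℝ × ℝ => fx p.1 p.2) MSq

lemma IsFol.isC1Family (hf : IsFol C β f fx) (hC : 0 ≤ C) (hβ : 0 < β) : IsC1Family f fx := by
  refine ⟨hf.hasDeriv, ?_, hf.derivCont⟩
  rintro ⟨x, y⟩ ⟨hx, hy⟩
  have hleaf : Tendsto (fun p : ℝ × ℝ => |f p.1 y - f x y|) (𝓝[MSq] (x, y)) (𝓝 0) := by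
    have : ContinuousWithinAt (fun p : ℝ × ℝ => f p.1 y) MSq (x, y) :=
      ContinuousWithinAt.comp (g := fun x' => f x' y) (t := unitInterval)
        (hf.hasDeriv y hy x hx).continuousWithinAt continuousWithinAt_fst fun _ hp => hp.1
    exact tendsto_iff_dist_tendsto_zero.1 this
  have hmod : Tendsto (fun p : ℝ × ℝ => C * |p.2 - y| ^ β) (𝓝[MSq] (x, y)) (𝓝 0) := by
    have : Continuous fun p : ℝ × ℝ => C * |p.2 - y| ^ β := by fun_prop (disch := exact hβ.le)
    exact (this.tendsto' (x, y) 0 (by simp [Real.zero_rpow hβ.ne'])).mono_left nhdsWithin_le_nhds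
  refine tendsto_iff_dist_tendsto_zero.2 (squeeze_zero' (.of_forall fun _ => dist_nonneg) ?_
    (by simpa using hmod.add hleaf))
  filter_upwards [self_mem_nhdsWithin] with p hp
  exact (_root_.abs_sub_le _ (f p.1 y) _).trans (add_le_add_left (hf.abs_sub_le hC hp.1 hy hp.2) _)

lemma IsC1Family.isFol (hf : IsC1Family f fx) (hC : 0 ≤ C) (hid : ∀ y ∈ unitInterval, f 0 y = y)
    (hbot : ∀ x ∈ unitInterval, f x 0 = 0) (htop : ∀ x ∈ unitInterval, f x 1 = 1)
    (hincr : ∀ x ∈ unitInterval,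
      IncrementsIn (fun s => C⁻¹ * s ^ (1 / β)) (fun s => C * s ^ β) (f x)) :
    IsFol C β f fx := by
  have hlo : ∀ s : ℝ, 0 ≤ s → 0 ≤ C⁻¹ * s ^ (1 / β) := fun s hs => by positivity
  exact
    { mapsTo := fun x hx y hy => (hincr x hx).mapsTo hlo (hbot x hx) (htop x hx) hy
      hasDeriv := hf.hasDeriv
      derivCont := hf.derivCont
      eq_id := hid
      eq_bot := hbot
      eq_top := htop
      lower := fun x hx _ hy _ hz _ => (hincr x hx).le_abs_sub hy hz
      upper := fun x hx _ hy _ hz _ => (hincr x hx).abs_sub_le hlo hy hz }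

lemma isFol_id (hβ : 0 < β) (hβ₁ : β ≤ 1) : IsFol 1 β (fun _ y => y) (fun _ _ => 0) := by
  have hfam : IsC1Family (fun _ y => y) (fun _ _ => 0) :=
    ⟨fun _ _ _ _ => hasDerivWithinAt_const _ _ _, continuousOn_snd, continuousOn_const⟩
  refine hfam.isFol zero_le_one (fun _ _ => rfl) (fun _ _ => rfl) (fun _ _ => rfl)
    fun _ _ y hy z hz hyz => ?_
  have hs : z - y ∈ unitInterval := ⟨sub_nonneg.2 hyz, by linarith [hy.1, hz.2]⟩
  simp only [inv_one, one_mul]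
  exact ⟨Real.rpow_le_self_of_le_one hs.1 hs.2 (one_le_one_div hβ hβ₁),
    Real.self_le_rpow_of_le_one hs.1 hs.2 hβ₁⟩

lemma inv_convexComb_le (hC₁ : 0 < C₁) (hC₂ : 0 < C₂) (ht : t ∈ unitInterval) :
    ((1 - t) * C₁ + t * C₂)⁻¹ ≤ (1 - t) * C₁⁻¹ + t * C₂⁻¹ := by
  simpa using (convexOn_zpow (-1)).2 hC₁ hC₂ (sub_nonneg.2 ht.2) ht.1 (sub_add_cancel 1 t)

lemma IsFol.convexComb (hC₁ : 0 < C₁) (hC₂ : 0 < C₂) (hβ : 0 < β) (hf : IsFol C₁ β f fx)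
    (hg : IsFol C₂ β g gx) (ht : t ∈ unitInterval) :
    IsFol ((1 - t) * C₁ + t * C₂) β (fun x y => (1 - t) * f x y + t * g x y)
      (fun x y => (1 - t) * fx x y + t * gx x y) := by
  have hf' := hf.isC1Family hC₁.le hβ
  have hg' := hg.isC1Family hC₂.le hβ
  have ht' : 0 ≤ 1 - t := sub_nonneg.2 ht.2
  have ht₀ : 0 ≤ t := ht.1
  have hfam : IsC1Family (fun x y => (1 - t) * f x y + t * g x y)
      (fun x y => (1 - t) * fx x y + t * gx x y) :=
    ⟨fun y hy x hx =>
        ((hf.hasDeriv y hy x hx).const_mul _).add ((hg.hasDeriv y hy x hx).const_mul _),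
      (hf'.continuousOn.const_mul _).add (hg'.continuousOn.const_mul _),
      (hf.derivCont.const_mul _).add (hg.derivCont.const_mul _)⟩
  refine hfam.isFol (by positivity)
    (fun y hy => by rw [hf.eq_id y hy, hg.eq_id y hy]; ring)
    (fun x hx => by rw [hf.eq_bot x hx, hg.eq_bot x hx]; ring)
    (fun x hx => by rw [hf.eq_top x hx, hg.eq_top x hx]; ring) fun x hx y hy z hz hyz => ?_
  obtain ⟨hf₁, hf₂⟩ := hf.incrementsIn hC₁ hβ hx y hy z hz hyz
  obtain ⟨hg₁, hg₂⟩ := hg.incrementsIn hC₂ hβ hx y hy z hz hyz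
  have hs : 0 ≤ (z - y) ^ (1 / β) := Real.rpow_nonneg (sub_nonneg.2 hyz) _
  have hlow := mul_le_mul_of_nonneg_right (inv_convexComb_le hC₁ hC₂ ht) hs
  exact ⟨by nlinarith, by nlinarith⟩

lemma eventually_unifClose_convexComb (hu : ContinuousOn (fun p : ℝ × ℝ => u p.1 p.2) MSq)
    (hv : ContinuousOn (fun p : ℝ × ℝ => v p.1 p.2) MSq) (hε : 0 < ε) :
    ∀ᶠ t in 𝓝[>] (0 : ℝ), UnifClose ε (fun x y => (1 - t) * u x y + t * v x y) u := by
  obtain ⟨M, hM⟩ := (isCompact_Icc.prod isCompact_Icc).exists_bound_of_continuousOn (hv.sub hu)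
  have hlim : Tendsto (fun t : ℝ => t * M) (𝓝[>] 0) (𝓝 0) :=
    ((continuous_mul_const M).tendsto' 0 0 (zero_mul M)).mono_left nhdsWithin_le_nhds
  filter_upwards [hlim.eventually_le_const hε, self_mem_nhdsWithin] with t ht ht₀ x hx y hy
  calc |(1 - t) * u x y + t * v x y - u x y| = |t * (v x y - u x y)| := by ring_nf
    _ = t * |v x y - u x y| := by rw [abs_mul, abs_of_pos ht₀]
    _ ≤ t * M := mul_le_mul_of_nonneg_left (hM (x, y) ⟨hx, hy⟩) (le_of_lt ht₀)
    _ ≤ ε := ht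

lemma continuousOn_gridInterp (N : ℕ) (hu : ContinuousOn (fun p : ℝ × ℝ => u p.1 p.2) MSq) :
    ContinuousOn (fun p : ℝ × ℝ => gridInterp N (u p.1) p.2) MSq := by
  have hhat (i : ℕ) : Continuous fun p : ℝ × ℝ => max 0 (1 - |N * p.2 - i|) := by fun_prop
  simp only [gridInterp, linInterp]
  refine continuousOn_finsetSum _ fun i hi => (hhat i).continuousOn.mul ?_
  exact hu.comp (f := fun p : ℝ × ℝ => (p.1, (i : ℝ) / N)) (by fun_prop) fun p hp =>
    ⟨hp.1, natCast_div_mem_unitInterval (Finset.mem_range_succ_iff.1 hi)⟩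

lemma eventually_unifClose_gridInterp (hu : ContinuousOn (fun p : ℝ × ℝ => u p.1 p.2) MSq)
    (hε : 0 < ε) : ∀ᶠ N : ℕ in atTop, UnifClose ε (fun x => gridInterp N (u x)) u := by
  obtain ⟨δ, hδ, hunif⟩ := Metric.uniformContinuousOn_iff_le.1
    ((isCompact_Icc.prod isCompact_Icc).uniformContinuousOn_of_continuous hu) ε hε
  filter_upwards [tendsto_one_div_atTop_nhds_zero_nat.eventually_le_const hδ, eventually_gt_atTop 0]
    with N hNδ hN x hx y hy
  refine abs_gridInterp_sub_le hN hy fun z hz hzy => hunif (x, z) ⟨hx, hz⟩ (x, y) ⟨hx, hy⟩ ?_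
  rw [Prod.dist_eq, dist_self]
  exact max_le hδ.le (hzy.trans hNδ)

lemma IsC1Family.gridInterp (N : ℕ) (hf : IsC1Family f fx) :
    IsC1Family (fun x => gridInterp N (f x)) (fun x => gridInterp N (fx x)) where
  hasDeriv _ _ x hx := HasDerivWithinAt.fun_sum fun _ hi => (hf.hasDeriv _
    (natCast_div_mem_unitInterval (Finset.mem_range_succ_iff.1 hi)) x hx).const_mul _
  continuousOn := continuousOn_gridInterp N hf.continuousOn
  derivCont := continuousOn_gridInterp N hf.derivCont

lemma IsFol.gridInterp {N : ℕ} (hN : 0 < N) (hf : IsFol C β f fx) (hC : 0 < C) (hβ : 0 < β)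
    (hβ₁ : β ≤ 1) : IsFol C β (fun x => gridInterp N (f x)) (fun x => gridInterp N (fx x)) := by
  refine ((hf.isC1Family hC.le hβ).gridInterp N).isFol hC.le
    (fun y hy => gridInterp_id hN hf.eq_id hy)
    (fun x hx => (gridInterp_zero hN _).trans (hf.eq_bot x hx))
    (fun x hx => (gridInterp_one hN _).trans (hf.eq_top x hx)) fun x hx => ?_
  refine incrementsIn_gridInterp hN ((convexOn_rpow (one_le_one_div hβ hβ₁)).smul (inv_pos.2 hC).le)
    ((Real.concaveOn_rpow hβ.le hβ₁).smul hC.le) (by simp [Real.zero_rpow (inv_ne_zero hβ.ne')])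
    (by simp [Real.zero_rpow hβ.ne']) fun i j hij hj => ?_
  exact hf.incrementsIn hC hβ hx _ (natCast_div_mem_unitInterval (hij.trans hj)) _
    (natCast_div_mem_unitInterval hj) (by gcongr)

lemma incrementsIn_gridInterp_linear {N : ℕ} (hN : 0 < N) {l : ℝ} {p : ℝ → ℝ}
    (hp : MapsTo p unitInterval unitInterval)
    (hlow : ∀ y ∈ unitInterval, ∀ z ∈ unitInterval, y ≤ z → l * (z - y) ≤ p z - p y) :
    IncrementsIn (l * ·) (N * ·) (gridInterp N p) := by
  have : (0 : ℝ) < N := by exact_mod_cast hN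
  refine incrementsIn_gridInterp hN ((LinearMap.mulLeft ℝ l).convexOn (convex_Ici 0))
    ((LinearMap.mulLeft ℝ (N : ℝ)).concaveOn (convex_Ici 0)) (mul_zero _) (mul_zero _)
    fun i j hij hj => ?_
  have hi := natCast_div_mem_unitInterval (hij.trans hj)
  have hj' := natCast_div_mem_unitInterval hj
  refine ⟨hlow _ hi _ hj' (by gcongr), ?_⟩
  rcases hij.eq_or_lt with rfl | hlt
  · simp
  · have hij' : (i : ℝ) + 1 ≤ j := by exact_mod_cast hlt
    calc p (j / N) - p (i / N) ≤ 1 := by linarith [(hp hi).1, (hp hj').2]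
      _ ≤ j - i := by linarith
      _ = N * (j / N - i / N) := by field_simp

lemma IsFol.exists_unifClose_biLipschitz (hC : 1 < C) (hβ : 0 < β) (hβ₁ : β ≤ 1)
    (hf : IsFol C β f fx) (hε : 0 < ε) :
    ∃ C' ∈ Ioo 0 C, ∃ l > 0, ∃ L > 0, ∃ g gx, IsFol C' β g gx ∧
      (∀ x ∈ unitInterval, IncrementsIn (l * ·) (L * ·) (g x)) ∧
      UnifClose ε g f ∧ UnifClose ε gx fx := by
  have hC₀ : 0 < C := one_pos.trans hC
  have hε' : 0 < ε / 2 := half_pos hε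
  have hid := isFol_id hβ hβ₁
  obtain ⟨t, hgf, hgxfx, ht⟩ := ((eventually_unifClose_convexComb
    (hf.isC1Family hC₀.le hβ).continuousOn (v := fun _ y => y) continuousOn_snd hε').and
    ((eventually_unifClose_convexComb hf.derivCont (v := fun _ _ => 0) continuousOn_const hε').and
      (Ioo_mem_nhdsGT one_pos))).exists
  have hg := hf.convexComb hC₀ one_pos hβ hid (Ioo_subset_Icc_self ht)
  set C' := (1 - t) * C + t * 1
  have hC' : C' ∈ Ioo 0 C := ⟨by nlinarith [ht.1, ht.2], by nlinarith [ht.1]⟩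
  obtain ⟨N, hNg, hNgx, hN⟩ := ((eventually_unifClose_gridInterp
    (u := fun x y => (1 - t) * f x y + t * y)
    (hg.isC1Family hC'.1.le hβ).continuousOn hε').and
    ((eventually_unifClose_gridInterp (u := fun x y => (1 - t) * fx x y + t * 0) hg.derivCont
      hε').and (eventually_gt_atTop 0))).exists
  refine ⟨C', hC', t, ht.1, N, by exact_mod_cast hN, _, _, hg.gridInterp hN hC'.1 hβ hβ₁,
    fun x hx => incrementsIn_gridInterp_linear hN (hg.mapsTo x hx) fun y hy z hz hyz => ?_,
    add_halves ε ▸ hNg.trans hgf, add_halves ε ▸ hNgx.trans hgxfx⟩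
  have hmono := (hf.strictMonoOn hC₀ hβ hx).monotoneOn hy hz hyz
  nlinarith [ht.2]

lemma IncrementsIn.exists_holder_of_close {C' l L : ℝ} (hC' : C' ∈ Ioo 0 C) (hβ : 0 < β)
    (hβ₁ : β < 1) (hl : 0 < l) :
    ∃ δ > 0, ∀ h k : ℝ → ℝ, IncrementsIn (fun s => C'⁻¹ * s ^ (1 / β)) (fun s => C' * s ^ β) h →
      IncrementsIn (l * ·) (L * ·) k → (∀ y ∈ unitInterval, |k y - h y| ≤ δ) →
      IncrementsIn (fun s => C⁻¹ * s ^ (1 / β)) (fun s => C * s ^ β) k := by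
  have hC : 0 < C := hC'.1.trans hC'.2
  obtain ⟨c₁, hc₁, hupp⟩ := exists_forall_mul_rpow_le (A := L) hC hβ.le hβ₁
  obtain ⟨c₂, hc₂, hlow⟩ :=
    exists_forall_mul_rpow_le (A := C⁻¹) hl zero_le_one (one_lt_one_div hβ hβ₁)
  set c := min c₁ c₂
  have : 0 < c := lt_min hc₁ hc₂
  have hdiff : 0 < C - C' := sub_pos.2 hC'.2
  have hdiff' : 0 < C'⁻¹ - C⁻¹ := sub_pos.2 (inv_strictAnti₀ hC'.1 hC'.2)
  refine ⟨min ((C - C') * c ^ β / 2) ((C'⁻¹ - C⁻¹) * c ^ (1 / β) / 2), by positivity,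
    fun h k hh hk hkh y hy z hz hyz => ?_⟩
  rcases le_total (z - y) c with hle | hge
  · have hs : 0 ≤ z - y := sub_nonneg.2 hyz
    obtain ⟨hk₁, hk₂⟩ := hk y hy z hz hyz
    have h₁ := hlow _ ⟨hs, hle.trans (min_le_right _ _)⟩
    have h₂ := hupp _ ⟨hs, hle.trans (min_le_left _ _)⟩
    rw [Real.rpow_one] at h₁ h₂
    exact ⟨h₁.trans hk₁, hk₂.trans h₂⟩
  · obtain ⟨hh₁, hh₂⟩ := hh y hy z hz hyz
    have hy' := abs_le.1 (hkh y hy)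
    have hz' := abs_le.1 (hkh z hz)
    have hδ₁ := min_le_left ((C - C') * c ^ β / 2) ((C'⁻¹ - C⁻¹) * c ^ (1 / β) / 2)
    have hδ₂ := min_le_right ((C - C') * c ^ β / 2) ((C'⁻¹ - C⁻¹) * c ^ (1 / β) / 2)
    have h₁ : (C - C') * c ^ β ≤ (C - C') * (z - y) ^ β := by gcongr
    have h₂ : (C'⁻¹ - C⁻¹) * c ^ (1 / β) ≤ (C'⁻¹ - C⁻¹) * (z - y) ^ (1 / β) := by gcongr
    exact ⟨by linarith [hy'.2, hz'.1], by linarith [hy'.1, hz'.2]⟩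

end Regularisation

section Shears

open scoped NNReal
open MeasureTheory.Measure

lemma hausdorffMeasure_image_le_of_lipschitzOnWith_fibers {X Y ι : Type*} [EMetricSpace X]
    [MeasurableSpace X] [BorelSpace X] [EMetricSpace Y] [MeasurableSpace Y] [BorelSpace Y]
    [Countable ι] [MeasurableSpace ι] [MeasurableSingletonClass ι] {κ : X → ι} (hκ : Measurable κ)
    {h : X → Y} {S : Set X} {K : ℝ≥0} {d : ℝ} (hd : 0 ≤ d)
    (hh : ∀ i, LipschitzOnWith K h (S ∩ κ ⁻¹' {i})) :
    μH[d] (h '' S) ≤ (K : ℝ≥0∞) ^ d * μH[d] S := by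
  have hfib (i : ι) : MeasurableSet (κ ⁻¹' {i}) := hκ (measurableSet_singleton i)
  calc μH[d] (h '' S) = μH[d] (⋃ i, h '' (S ∩ κ ⁻¹' {i})) := by
        rw [← image_iUnion, ← inter_iUnion, ← preimage_iUnion, iUnion_of_singleton,
          preimage_univ, inter_univ]
    _ ≤ ∑' i, μH[d] (h '' (S ∩ κ ⁻¹' {i})) := measure_iUnion_le _
    _ ≤ ∑' i, (K : ℝ≥0∞) ^ d * μH[d] (S ∩ κ ⁻¹' {i}) :=
        ENNReal.tsum_le_tsum fun i => (hh i).hausdorffMeasure_image_le hd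
    _ = (K : ℝ≥0∞) ^ d * ∑' i, μH[d].restrict S (κ ⁻¹' {i}) := by
        simp only [ENNReal.tsum_mul_left, Measure.restrict_apply (hfib _), inter_comm]
    _ = (K : ℝ≥0∞) ^ d * μH[d] S := by
        rw [← measure_iUnion (fun i j hij => (disjoint_singleton.2 hij).preimage κ) hfib,
          ← preimage_iUnion, iUnion_of_singleton, preimage_univ, restrict_apply_univ]

variable {n : ℕ} {c y z : ℝ}

/-- The `1/n`-periodic tent function, of slope `±1` and height `1/(2n)`. -/
def tent (n : ℕ) (y : ℝ) : ℝ := |n * y - round (n * y)| / n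

/-- The first halves of the periods of `tent n`, where its slope is `1`. -/
def lowerHalves (n : ℕ) : Set ℝ := {y | Int.fract (n * y) ≤ 1 / 2}

lemma abs_tent_sub_le (hn : 0 < n) (y z : ℝ) : |tent n z - tent n y| ≤ |z - y| := by
  have hn' : (0 : ℝ) < n := by exact_mod_cast hn
  have hcircle : |‖((n * z : ℝ) : UnitAddCircle)‖ - ‖((n * y : ℝ) : UnitAddCircle)‖| ≤
      n * |z - y| :=
    calc _ ≤ ‖((n * z - n * y : ℝ) : UnitAddCircle)‖ := abs_norm_sub_norm_le _ _
      _ ≤ |n * z - n * y| := by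
          rw [UnitAddCircle.norm_eq]
          simpa using round_le ((n : ℝ) * z - n * y) 0
      _ = n * |z - y| := by rw [← mul_sub, abs_mul, abs_of_pos hn']
  rw [UnitAddCircle.norm_eq, UnitAddCircle.norm_eq] at hcircle
  rwa [tent, tent, ← sub_div, abs_div, abs_of_pos hn', div_le_iff₀' hn']

lemma tent_sub_of_mem_lowerHalves (hn : 0 < n) (hy : y ∈ lowerHalves n) (hz : z ∈ lowerHalves n)
    (h : ⌊(n : ℝ) * y⌋ = ⌊(n : ℝ) * z⌋) : tent n z - tent n y = z - y := by
  have hn' : (n : ℝ) ≠ 0 := by exact_mod_cast hn.ne'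
  rw [lowerHalves, mem_ofPred_eq] at hy hz
  rw [tent, tent, abs_sub_round_eq_min, abs_sub_round_eq_min, min_eq_left (by linarith),
    min_eq_left (by linarith), ← Int.self_sub_floor, ← Int.self_sub_floor, h]
  field_simp
  ring

lemma tent_sub_of_notMem_lowerHalves (hn : 0 < n) (hy : y ∉ lowerHalves n)
    (hz : z ∉ lowerHalves n) (h : ⌊(n : ℝ) * y⌋ = ⌊(n : ℝ) * z⌋) :
    tent n z - tent n y = -(z - y) := by
  have hn' : (n : ℝ) ≠ 0 := by exact_mod_cast hn.ne'
  rw [lowerHalves, mem_ofPred_eq, not_le] at hy hz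
  rw [tent, tent, abs_sub_round_eq_min, abs_sub_round_eq_min, min_eq_right (by linarith),
    min_eq_right (by linarith), ← Int.self_sub_floor, ← Int.self_sub_floor, h]
  field_simp
  ring

lemma measurableSet_lowerHalves (n : ℕ) : MeasurableSet (lowerHalves n) :=
  measurableSet_le (measurable_fract.comp (measurable_const_mul _)) measurable_const

/-- A perturbation of the identity whose slope alternates between `1 + c` on `lowerHalves n` and
`1 - c` off it. -/
def shear (n : ℕ) (c y : ℝ) : ℝ := y + c * tent n y

lemma shear_zero (n : ℕ) (c : ℝ) : shear n c 0 = 0 := by simp [shear, tent]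

lemma shear_one (n : ℕ) (c : ℝ) : shear n c 1 = 1 := by simp [shear, tent]

lemma continuous_shear (hn : 0 < n) (c : ℝ) : Continuous (shear n c) := by
  have : LipschitzWith 1 (tent n) :=
    .of_dist_le_mul fun y z => by simpa [Real.dist_eq] using abs_tent_sub_le hn z y
  exact continuous_id.add (this.continuous.const_mul c)

lemma abs_shear_sub_le (hc : |c| ≤ 1) (y : ℝ) : |shear n c y - y| ≤ 1 / n := by
  rw [shear, add_sub_cancel_left, abs_mul]
  have htent : |tent n y| ≤ 1 / n := by
    rw [tent, abs_div, abs_abs, Nat.abs_cast]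
    gcongr
    linarith [abs_sub_round ((n : ℝ) * y)]
  exact (mul_le_of_le_one_left (abs_nonneg _) hc).trans htent

lemma incrementsIn_shear (hn : 0 < n) {σ : ℝ} (hσ : 0 ≤ σ) (hc : |c| ≤ 1 - σ) :
    IncrementsIn (σ * ·) (2 * ·) (shear n c) := by
  intro y _ z _ hyz
  have hs : 0 ≤ z - y := sub_nonneg.2 hyz
  have htent : |c * (tent n z - tent n y)| ≤ (1 - σ) * (z - y) := by
    rw [abs_mul]
    exact mul_le_mul hc ((abs_tent_sub_le hn y z).trans_eq (abs_of_nonneg hs)) (abs_nonneg _)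
      ((abs_nonneg c).trans hc)
  obtain ⟨hlow, hupp⟩ := abs_le.1 htent
  rw [show shear n c z - shear n c y = (z - y) + c * (tent n z - tent n y) by
    rw [shear, shear]; ring]
  exact ⟨by linarith, by nlinarith⟩

lemma mapsTo_shear (hn : 0 < n) (hc : |c| ≤ 1) : MapsTo (shear n c) unitInterval unitInterval :=
  (incrementsIn_shear hn le_rfl (by simpa using hc)).mapsTo (fun s _ => (zero_mul s).ge)
    (shear_zero n c) (shear_one n c)

lemma lipschitzOnWith_shear_of_notMem (hn : 0 < n) (σ : ℝ≥0) (k : ℤ) :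
    LipschitzOnWith σ (shear n (1 - σ)) ((lowerHalves n)ᶜ ∩ (fun y => ⌊(n : ℝ) * y⌋) ⁻¹' {k}) := by
  refine .of_dist_le_mul fun z hz y hy => ?_
  have htent := tent_sub_of_notMem_lowerHalves hn hy.1 hz.1 (hy.2.trans hz.2.symm)
  have : shear n (1 - σ) z - shear n (1 - σ) y = σ * (z - y) := by
    rw [shear, shear]; linear_combination (1 - (σ : ℝ)) * htent
  rw [Real.dist_eq, Real.dist_eq, this, abs_mul, NNReal.abs_eq]

lemma lipschitzOnWith_shear_of_mem (hn : 0 < n) (σ : ℝ≥0) (k : ℤ) :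
    LipschitzOnWith σ (shear n (σ - 1)) (lowerHalves n ∩ (fun y => ⌊(n : ℝ) * y⌋) ⁻¹' {k}) := by
  refine .of_dist_le_mul fun z hz y hy => ?_
  have htent := tent_sub_of_mem_lowerHalves hn hy.1 hz.1 (hy.2.trans hz.2.symm)
  have : shear n (σ - 1) z - shear n (σ - 1) y = σ * (z - y) := by
    rw [shear, shear]; linear_combination ((σ : ℝ) - 1) * htent
  rw [Real.dist_eq, Real.dist_eq, this, abs_mul, NNReal.abs_eq]

lemma volume_image_comp_shear_le (hn : 0 < n) {h : ℝ → ℝ} {L K : ℝ≥0}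
    (hh : LipschitzOnWith L h unitInterval) (hc : |c| ≤ 1) {S : Set ℝ}
    (hS : ∀ k : ℤ, LipschitzOnWith K (shear n c) (S ∩ (fun y => ⌊(n : ℝ) * y⌋) ⁻¹' {k})) :
    volume ((fun y => h (shear n c y)) '' (unitInterval ∩ S)) ≤ L * K := by
  have hκ : Measurable fun y : ℝ => ⌊(n : ℝ) * y⌋ := (measurable_const_mul _).floor
  have hpieces (k : ℤ) : LipschitzOnWith (L * K) (fun y => h (shear n c y))
      (unitInterval ∩ S ∩ (fun y => ⌊(n : ℝ) * y⌋) ⁻¹' {k}) :=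
    hh.comp ((hS k).mono fun _ hy => ⟨hy.1.2, hy.2⟩) fun _ hy => mapsTo_shear hn hc hy.1.1
  have himage := hausdorffMeasure_image_le_of_lipschitzOnWith_fibers hκ zero_le_one hpieces
  rw [hausdorffMeasure_real, ENNReal.rpow_one, ENNReal.coe_mul] at himage
  calc volume ((fun y => h (shear n c y)) '' (unitInterval ∩ S))
      ≤ L * K * volume (unitInterval ∩ S) := himage
    _ ≤ L * K * 1 := by
        gcongr
        exact (measure_mono inter_subset_left).trans_eq volume_unitInterval
    _ = L * K := mul_one _

end Shears

section Cutoff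

variable {q η x : ℝ}

/-- A smooth cutoff equal to `1/2` at `0`, to `0` on `[η, q]` and to `1` on `[q + η, ∞)`. -/
def cutoff (q η x : ℝ) : ℝ :=
  (1 / 2) * (1 - Real.smoothTransition (x / η)) + Real.smoothTransition ((x - q) / η)

lemma contDiff_cutoff (q η : ℝ) : ContDiff ℝ 1 (cutoff q η) := by
  have h : ContDiff ℝ 1 Real.smoothTransition := Real.smoothTransition.contDiff (n := 1)
  exact (contDiff_const.mul (contDiff_const.sub (h.comp (contDiff_id.div_const η)))).add
    (h.comp ((contDiff_id.sub contDiff_const).div_const η))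

lemma cutoff_zero (hη : 0 ≤ η) (hq : 0 ≤ q) : cutoff q η 0 = 1 / 2 := by
  rw [cutoff, Real.smoothTransition.zero_of_nonpos (by simp),
    Real.smoothTransition.zero_of_nonpos (div_nonpos_of_nonpos_of_nonneg (by linarith) hη)]
  norm_num

lemma cutoff_of_le (hη : 0 < η) (hηx : η ≤ x) (hxq : x ≤ q) : cutoff q η x = 0 := by
  rw [cutoff, Real.smoothTransition.one_of_one_le (by rwa [one_le_div hη]),
    Real.smoothTransition.zero_of_nonpos (div_nonpos_of_nonpos_of_nonneg (by linarith) hη.le)]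
  norm_num

lemma cutoff_of_add_le (hη : 0 < η) (hq : 0 ≤ q) (hqx : q + η ≤ x) : cutoff q η x = 1 := by
  rw [cutoff, Real.smoothTransition.one_of_one_le (by rw [one_le_div hη]; linarith),
    Real.smoothTransition.one_of_one_le (by rw [one_le_div hη]; linarith)]
  norm_num

lemma cutoff_mem (hη : 0 < η) (hηq : η ≤ q) (x : ℝ) : cutoff q η x ∈ unitInterval := by
  rw [cutoff]
  have h₀ := Real.smoothTransition.nonneg (x / η)
  have h₁ := Real.smoothTransition.le_one (x / η)
  rcases le_total x η with hxη | hηx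
  · rw [Real.smoothTransition.zero_of_nonpos (x := (x - q) / η)
      (div_nonpos_of_nonpos_of_nonneg (by linarith) hη.le)]
    constructor <;> linarith
  · rw [Real.smoothTransition.one_of_one_le (x := x / η) (by rwa [one_le_div hη])]
    have := Real.smoothTransition.nonneg ((x - q) / η)
    have := Real.smoothTransition.le_one ((x - q) / η)
    constructor <;> linarith

end Cutoff

section Perturbation

open scoped NNReal

variable {C C' β ε l : ℝ} {n : ℕ} {w : ℝ → ℝ} {f fx g gx u ux : ℝ → ℝ → ℝ}

/-- The family moving from `f` to `g` as the weight `w x` moves from `0` to `1`. -/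
def blend (w : ℝ → ℝ) (f g : ℝ → ℝ → ℝ) (x y : ℝ) : ℝ := (1 - w x) * f x y + w x * g x y

/-- The `x`-derivative of `blend w f g`, where `fx` and `gx` are those of `f` and `g`. -/
def blendDeriv (w : ℝ → ℝ) (f fx g gx : ℝ → ℝ → ℝ) (x y : ℝ) : ℝ :=
  blend w fx gx x y + deriv w x * (g x y - f x y)

lemma continuousOn_blend (hw : Continuous w)
    (hf : ContinuousOn (fun p : ℝ × ℝ => f p.1 p.2) MSq)
    (hg : ContinuousOn (fun p : ℝ × ℝ => g p.1 p.2) MSq) :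
    ContinuousOn (fun p : ℝ × ℝ => blend w f g p.1 p.2) MSq := by
  have hw' : Continuous fun p : ℝ × ℝ => w p.1 := hw.comp continuous_fst
  exact ((continuous_const.sub hw').continuousOn.mul hf).add (hw'.continuousOn.mul hg)

lemma IsC1Family.blend (hw : ContDiff ℝ 1 w) (hf : IsC1Family f fx) (hg : IsC1Family g gx) :
    IsC1Family (blend w f g) (blendDeriv w f fx g gx) where
  hasDeriv y hy x hx := by
    have hw' := (hw.differentiable one_ne_zero x).hasDerivAt.hasDerivWithinAt (s := unitInterval)
    refine (((hw'.const_sub 1).fun_mul (hf.hasDeriv y hy x hx)).fun_add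
      (hw'.fun_mul (hg.hasDeriv y hy x hx))).congr_deriv ?_
    rw [blendDeriv, _root_.blend]
    ring
  continuousOn := continuousOn_blend hw.continuous hf.continuousOn hg.continuousOn
  derivCont :=
    have hw' : Continuous fun p : ℝ × ℝ => deriv w p.1 :=
      (hw.continuous_deriv le_rfl).comp continuous_fst
    (continuousOn_blend hw.continuous hf.derivCont hg.derivCont).add
      (hw'.continuousOn.mul (hg.continuousOn.sub hf.continuousOn))

lemma continuousOn_comp_right {φ : ℝ → ℝ} (hu : ContinuousOn (fun p : ℝ × ℝ => u p.1 p.2) MSq)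
    (hφ : Continuous φ) (hmaps : MapsTo φ unitInterval unitInterval) :
    ContinuousOn (fun p : ℝ × ℝ => u p.1 (φ p.2)) MSq :=
  hu.comp (f := fun p : ℝ × ℝ => (p.1, φ p.2)) (by fun_prop) fun _ hp => ⟨hp.1, hmaps hp.2⟩

lemma IsC1Family.comp_right {φ : ℝ → ℝ} (hf : IsC1Family f fx) (hφ : Continuous φ)
    (hmaps : MapsTo φ unitInterval unitInterval) :
    IsC1Family (fun x y => f x (φ y)) (fun x y => fx x (φ y)) where
  hasDeriv y hy := hf.hasDeriv (φ y) (hmaps hy)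
  continuousOn := continuousOn_comp_right hf.continuousOn hφ hmaps
  derivCont := continuousOn_comp_right hf.derivCont hφ hmaps

lemma UnifClose.blend (hw : MapsTo w unitInterval unitInterval) (hf : UnifClose ε f u)
    (hg : UnifClose ε g u) : UnifClose ε (blend w f g) u := fun x hx y hy =>
  convex_closedBall (u x y) ε (hf x hx y hy) (hg x hx y hy) (sub_nonneg.2 (hw hx).2) (hw hx).1
    (sub_add_cancel 1 (w x))

lemma UnifClose.blendDeriv {M : ℝ} (hw : MapsTo w unitInterval unitInterval)
    (hM : ∀ x ∈ unitInterval, |deriv w x| ≤ M) (hf : UnifClose ε f u) (hg : UnifClose ε g u)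
    (hfx : UnifClose ε fx ux) (hgx : UnifClose ε gx ux) :
    UnifClose ((1 + 2 * M) * ε) (blendDeriv w f fx g gx) ux := by
  intro x hx y hy
  have hgf : |g x y - f x y| ≤ 2 * ε :=
    calc |g x y - f x y| = |(g x y - u x y) - (f x y - u x y)| := by ring_nf
      _ ≤ |g x y - u x y| + |f x y - u x y| := abs_sub _ _
      _ ≤ 2 * ε := by linarith [hf x hx y hy, hg x hx y hy]
  calc |_root_.blendDeriv w f fx g gx x y - ux x y|
      = |(_root_.blend w fx gx x y - ux x y) + deriv w x * (g x y - f x y)| := by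
        rw [_root_.blendDeriv]; ring_nf
    _ ≤ |_root_.blend w fx gx x y - ux x y| + |deriv w x| * |g x y - f x y| := by
        rw [← abs_mul]; exact abs_add_le _ _
    _ ≤ ε + M * (2 * ε) := by
        gcongr
        · exact hfx.blend hw hgx x hx y hy
        · exact (abs_nonneg _).trans (hM x hx)
        · exact hM x hx
    _ = (1 + 2 * M) * ε := by ring

lemma eventually_unifClose_comp_shear (hu : ContinuousOn (fun p : ℝ × ℝ => u p.1 p.2) MSq)
    (hε : 0 < ε) :
    ∀ᶠ n : ℕ in atTop, ∀ c, |c| ≤ 1 → UnifClose ε (fun x y => u x (shear n c y)) u := by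
  obtain ⟨δ, hδ, hunif⟩ := Metric.uniformContinuousOn_iff_le.1
    ((isCompact_Icc.prod isCompact_Icc).uniformContinuousOn_of_continuous hu) ε hε
  filter_upwards [tendsto_one_div_atTop_nhds_zero_nat.eventually_le_const hδ, eventually_gt_atTop 0]
    with n hnδ hn c hc x hx y hy
  refine hunif (x, shear n c y) ⟨hx, mapsTo_shear hn hc hy⟩ (x, y) ⟨hx, hy⟩ ?_
  rw [Prod.dist_eq, dist_self]
  exact max_le hδ.le ((abs_shear_sub_le hc y).trans hnδ)

/-- The perturbation of `f` whose leaf labels are sheared in opposite directions according to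
whether the weight `w x` is `0` or `1`. It is the identity where `f` is and `w x = 1 / 2`. -/
def zigzag (w : ℝ → ℝ) (n : ℕ) (σ : ℝ) (f : ℝ → ℝ → ℝ) : ℝ → ℝ → ℝ :=
  blend w (fun x y => f x (shear n (1 - σ) y)) (fun x y => f x (shear n (σ - 1) y))

/-- The `x`-derivative of `zigzag w n σ f`, where `fx` is that of `f`. -/
def zigzagDeriv (w : ℝ → ℝ) (n : ℕ) (σ : ℝ) (f fx : ℝ → ℝ → ℝ) : ℝ → ℝ → ℝ :=
  blendDeriv w (fun x y => f x (shear n (1 - σ) y)) (fun x y => fx x (shear n (1 - σ) y))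
    (fun x y => f x (shear n (σ - 1) y)) (fun x y => fx x (shear n (σ - 1) y))

section ShearAmplitude

variable {σ : ℝ}

lemma abs_one_sub_le_one (hσ : σ ∈ unitInterval) : |1 - σ| ≤ 1 :=
  (abs_of_nonneg (sub_nonneg.2 hσ.2)).trans_le (sub_le_self 1 hσ.1)

lemma abs_sub_one_le_one (hσ : σ ∈ unitInterval) : |σ - 1| ≤ 1 :=
  (abs_sub_comm σ 1).trans_le (abs_one_sub_le_one hσ)

lemma IsC1Family.zigzag (hn : 0 < n) (hσ : σ ∈ unitInterval) (hw : ContDiff ℝ 1 w)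
    (hf : IsC1Family f fx) : IsC1Family (zigzag w n σ f) (zigzagDeriv w n σ f fx) :=
  (hf.comp_right (continuous_shear hn _) (mapsTo_shear hn (abs_one_sub_le_one hσ))).blend hw
    (hf.comp_right (continuous_shear hn _) (mapsTo_shear hn (abs_sub_one_le_one hσ)))

lemma incrementsIn_zigzag {L x : ℝ} (hn : 0 < n) (hσ : σ ∈ unitInterval) (hw : w x ∈ unitInterval)
    (hl : 0 ≤ l) (hL : 0 ≤ L) (hf : IncrementsIn (l * ·) (L * ·) (f x)) :
    IncrementsIn (l * σ * ·) (L * 2 * ·) (zigzag w n σ f x) := by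
  have habs : |1 - σ| = 1 - σ := abs_of_nonneg (sub_nonneg.2 hσ.2)
  exact .convexComb hw
    (hf.comp_linear hl hσ.1 hL (incrementsIn_shear hn hσ.1 habs.le)
      (mapsTo_shear hn (abs_one_sub_le_one hσ)))
    (hf.comp_linear hl hσ.1 hL (incrementsIn_shear hn hσ.1 ((abs_sub_comm _ _).trans habs).le)
      (mapsTo_shear hn (abs_sub_one_le_one hσ)))

lemma IsC1Family.eventually_unifClose_zigzag (hf : IsC1Family f fx) (hw : ContDiff ℝ 1 w)
    (hwI : MapsTo w unitInterval unitInterval) (hσ : σ ∈ unitInterval) (hε : 0 < ε) :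
    ∀ᶠ n in atTop, UnifClose ε (_root_.zigzag w n σ f) f ∧
      UnifClose ε (zigzagDeriv w n σ f fx) fx := by
  obtain ⟨M, hM⟩ := (isCompact_Icc (a := (0 : ℝ)) (b := 1)).exists_bound_of_continuousOn
    (hw.continuous_deriv le_rfl).continuousOn
  have hM₀ : 0 ≤ M := (norm_nonneg _).trans (hM 0 unitInterval.zero_mem)
  have hpos : 0 < 1 + 2 * M := by positivity
  filter_upwards [eventually_unifClose_comp_shear hf.continuousOn hε,
    eventually_unifClose_comp_shear hf.continuousOn (div_pos hε hpos),
    eventually_unifClose_comp_shear hf.derivCont (div_pos hε hpos)] with n h₁ h₂ h₃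
  have hσ₁ := abs_one_sub_le_one hσ
  have hσ₂ := abs_sub_one_le_one hσ
  refine ⟨(h₁ _ hσ₁).blend hwI (h₁ _ hσ₂), ?_⟩
  have := UnifClose.blendDeriv hwI hM (h₂ _ hσ₁) (h₂ _ hσ₂) (h₃ _ hσ₁) (h₃ _ hσ₂)
  rwa [mul_div_cancel₀ _ hpos.ne'] at this

lemma IsFol.eventually_isFol_zigzag {L : ℝ} (hC' : C' ∈ Ioo 0 C) (hβ : 0 < β) (hβ₁ : β < 1)
    (hf : IsFol C' β f fx) (hl : 0 < l) (hL : 0 ≤ L)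
    (hincr : ∀ x ∈ unitInterval, IncrementsIn (l * ·) (L * ·) (f x)) (hw : ContDiff ℝ 1 w)
    (hwI : MapsTo w unitInterval unitInterval) (hw₀ : w 0 = 1 / 2) (hσ : σ ∈ Ioc 0 1) :
    ∀ᶠ n in atTop, IsFol C β (zigzag w n σ f) (zigzagDeriv w n σ f fx) := by
  obtain ⟨δ, hδ, hholder⟩ := IncrementsIn.exists_holder_of_close (C := C) (L := L * 2) hC' hβ hβ₁
    (mul_pos hl hσ.1)
  have hσ' : σ ∈ unitInterval := Ioc_subset_Icc_self hσ
  have hfam := hf.isC1Family hC'.1.le hβ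
  filter_upwards [hfam.eventually_unifClose_zigzag hw hwI hσ' hδ, eventually_gt_atTop 0]
    with n hclose hn
  refine (hfam.zigzag hn hσ' hw).isFol (hC'.1.trans hC'.2).le (fun y hy => ?_) (fun x hx => ?_)
    (fun x hx => ?_) fun x hx => hholder _ _ (hf.incrementsIn hC'.1 hβ hx)
      (incrementsIn_zigzag hn hσ' (hwI hx) hl.le hL (hincr x hx)) (hclose.1 x hx)
  · simp only [zigzag, blend]
    rw [hf.eq_id _ (mapsTo_shear hn (abs_one_sub_le_one hσ') hy),
      hf.eq_id _ (mapsTo_shear hn (abs_sub_one_le_one hσ') hy), hw₀, shear, shear]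
    ring
  · simp only [zigzag, blend, shear_zero, hf.eq_bot x hx]
    ring
  · simp only [zigzag, blend, shear_one, hf.eq_top x hx]
    ring

end ShearAmplitude

lemma IncrementsIn.lipschitzOnWith {L : ℝ≥0} {h : ℝ → ℝ} (hl : 0 ≤ l)
    (hh : IncrementsIn (l * ·) (L * ·) h) : LipschitzOnWith L h unitInterval :=
  .of_dist_le_mul fun _ hz _ hy => hh.abs_sub_le (fun _ hs => mul_nonneg hl hs) hy hz

lemma volume_zigzag_image_compl_lowerHalves_le {L σ : ℝ≥0} {x : ℝ} (hn : 0 < n) (hl : 0 ≤ l)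
    (hf : IncrementsIn (l * ·) (L * ·) (f x)) (hσ : (σ : ℝ) ∈ unitInterval) (hw : w x = 0) :
    volume (zigzag w n σ f x '' (unitInterval ∩ (lowerHalves n)ᶜ)) ≤ L * σ := by
  have : zigzag w n σ f x = fun y => f x (shear n (1 - σ) y) := by
    funext y; simp [zigzag, blend, hw]
  rw [this]
  exact volume_image_comp_shear_le hn (hf.lipschitzOnWith hl) (abs_one_sub_le_one hσ)
    (lipschitzOnWith_shear_of_notMem hn σ)

lemma volume_zigzag_image_lowerHalves_le {L σ : ℝ≥0} {x : ℝ} (hn : 0 < n) (hl : 0 ≤ l)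
    (hf : IncrementsIn (l * ·) (L * ·) (f x)) (hσ : (σ : ℝ) ∈ unitInterval) (hw : w x = 1) :
    volume (zigzag w n σ f x '' (unitInterval ∩ lowerHalves n)) ≤ L * σ := by
  have : zigzag w n σ f x = fun y => f x (shear n (σ - 1) y) := by
    funext y; simp [zigzag, blend, hw]
  rw [this]
  exact volume_image_comp_shear_le hn (hf.lipschitzOnWith hl) (abs_sub_one_le_one hσ)
    (lipschitzOnWith_shear_of_mem hn σ)

end Perturbation

section LeafDefect

open scoped NNReal

variable {C α β : ℝ} {A : Set (ℝ × ℝ)} {E : Set ℝ} {ε : ℝ≥0∞} {q x : ℝ}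

/-- The `L¹` distance between the indicator of `A` and the function `φ` of the leaf label. -/
def leafDefect (F : Fol C β) (A : Set (ℝ × ℝ)) (φ : ℝ → ℝ) : ℝ≥0∞ :=
  ∫⁻ p, ‖A.indicator 1 p - φ (projF F.f p)‖ₑ ∂muM

/-- The foliations for which `A` is, up to an error less than `ε`, a union of leaves. Labels are
tested against continuous functions, which makes this an open condition. -/
def nearlySaturated (C β : ℝ) (A : Set (ℝ × ℝ)) (ε : ℝ≥0∞) : Set (Fol C β) :=
  {F | ∃ φ, Continuous φ ∧ HasCompactSupport φ ∧ leafDefect F A φ < ε}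

lemma leafDefect_le_add {F G : Fol C β} {φ : ℝ → ℝ} {e : ℝ≥0∞}
    (h : ∀ p ∈ MSq, edist (φ (projF F.f p)) (φ (projF G.f p)) ≤ e) :
    leafDefect G A φ ≤ leafDefect F A φ + e :=
  calc leafDefect G A φ ≤ ∫⁻ p, (‖A.indicator 1 p - φ (projF F.f p)‖ₑ + e) ∂muM := by
        refine lintegral_mono_ae ((ae_restrict_mem measurableSet_MSq).mono fun p hp => ?_)
        simp only [← edist_eq_enorm_sub]
        exact (edist_triangle _ _ _).trans (add_le_add_right (h p hp) _)
    _ = leafDefect F A φ + e := by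
        rw [lintegral_add_right _ measurable_const, lintegral_const, measure_univ, mul_one,
          leafDefect]

lemma isOpenWrt_nearlySaturated (hC : 0 < C) (hβ : 0 < β) (A : Set (ℝ × ℝ)) (ε : ℝ≥0∞) :
    IsOpenWrt (dalphaF α) (nearlySaturated C β A ε) := by
  rintro F ⟨φ, hφ, hφc, hF⟩
  obtain ⟨e, he, heε⟩ := ENNReal.lt_iff_exists_add_pos_lt.1 hF
  obtain ⟨δ, hδ, hunif⟩ := Metric.uniformContinuous_iff_le.1
    (hφc.uniformContinuous_of_continuous hφ) e he
  obtain ⟨c, hc, hcδ⟩ := exists_forall_mul_rpow_le_const hC.le hβ hδ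
  refine ⟨c, hc, fun G hG => ⟨φ, hφ, hφc, (leafDefect_le_add fun p hp => ?_).trans_lt heε⟩⟩
  have hGF : UnifClose c G.f F.f := fun x hx y hy => (F.unifClose_dalphaF G x hx y hy).trans hG.le
  have hproj : dist (projF F.f p) (projF G.f p) ≤ δ := by
    rw [dist_comm]
    exact (F.isFol.unifClose_hinv hC hβ G.isFol hGF p.1 hp.1 p.2 hp.2).trans
      (hcδ c ⟨hc.le, le_rfl⟩)
  rw [edist_le_coe]
  exact hunif hproj

lemma mem_nearlySaturated_of_indicator (hC : 0 < C) (hβ : 0 < β) {F : Fol C β}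
    (hA : MeasurableSet A) (hE : MeasurableSet E) (h : leafDefect F A (E.indicator 1) < ε) :
    F ∈ nearlySaturated C β A ε := by
  have hproj := F.aemeasurable_projF hC hβ
  have := F.isProbabilityMeasure_quotM hC hβ
  obtain ⟨e, he, heε⟩ := ENNReal.lt_iff_exists_add_pos_lt.1 h
  have hint : Integrable (E.indicator (1 : ℝ → ℝ)) (quotM F) := (integrable_const 1).indicator hE
  obtain ⟨φ, hφc, hφE, hφ, -⟩ := hint.exists_hasCompactSupport_lintegral_sub_le
    (ε := e) (by exact_mod_cast he.ne')
  have hEm : Measurable (E.indicator (1 : ℝ → ℝ)) := measurable_const.indicator hE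
  have hφm : Measurable fun y => ‖E.indicator 1 y - φ y‖ₑ := (hEm.sub hφ.measurable).enorm
  have hAE : AEMeasurable (fun p => A.indicator (1 : ℝ × ℝ → ℝ) p - E.indicator 1 (projF F.f p))
      muM := (measurable_const.indicator hA).aemeasurable.sub (hEm.comp_aemeasurable hproj)
  refine ⟨φ, hφ, hφc, lt_of_le_of_lt ?_ heε⟩
  calc leafDefect F A φ
      ≤ ∫⁻ p, (‖A.indicator 1 p - E.indicator 1 (projF F.f p)‖ₑ +
          ‖E.indicator 1 (projF F.f p) - φ (projF F.f p)‖ₑ) ∂muM := by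
        refine lintegral_mono fun p => ?_
        rw [← sub_add_sub_cancel _ (E.indicator 1 (projF F.f p))]
        exact enorm_add_le _ _
    _ = leafDefect F A (E.indicator 1) + ∫⁻ y, ‖E.indicator 1 y - φ y‖ₑ ∂quotM F := by
        rw [lintegral_add_left' hAE.enorm, quotM, lintegral_map' hφm.aemeasurable hproj, leafDefect]
    _ ≤ leafDefect F A (E.indicator 1) + e := by gcongr

lemma lintegral_comp_hinv_le (hC : 0 ≤ C) (hβ : 0 < β) (F : Fol C β) (hx : x ∈ unitInterval)
    {g : ℝ → ℝ≥0∞} (hg : ∀ y, g y ≤ 1) {S : Set ℝ} (hgS : ∀ y ∉ S, g y = 0) :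
    ∫⁻ z in unitInterval, g (hinv F.f x z) ≤ volume (F.f x '' (unitInterval ∩ S)) :=
  calc ∫⁻ z in unitInterval, g (hinv F.f x z)
      ≤ ∫⁻ z in unitInterval, (F.f x '' (unitInterval ∩ S)).indicator 1 z := by
        refine setLIntegral_mono' measurableSet_Icc fun z hz => ?_
        by_cases hzS : hinv F.f x z ∈ S
        · have hz' : z ∈ F.f x '' (unitInterval ∩ S) :=
            ⟨_, ⟨F.isFol.hinv_mem hC hβ hx hz, hzS⟩, F.isFol.apply_hinv hC hβ hx hz⟩
          rw [indicator_of_mem hz']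
          exact hg _
        · exact (hgS _ hzS).trans_le zero_le
    _ ≤ ∫⁻ z, (F.f x '' (unitInterval ∩ S)).indicator 1 z := setLIntegral_le_lintegral _ _
    _ ≤ volume (F.f x '' (unitInterval ∩ S)) := lintegral_indicator_one_le _

lemma muM_eq_prod : muM = (volume.restrict unitInterval).prod (volume.restrict unitInterval) := by
  rw [muM, MSq, Measure.volume_eq_prod, Measure.prod_restrict]

lemma enorm_indicator_sub_indicator_le_one {X Y : Type*} (A : Set X) (E : Set Y) (x : X) (y : Y) :
    ‖A.indicator (1 : X → ℝ) x - E.indicator (1 : Y → ℝ) y‖ₑ ≤ 1 := by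
  by_cases hx : x ∈ A <;> by_cases hy : y ∈ E <;> simp [hx, hy]

lemma lintegral_enorm_sub_indicator_hinv_le (hC : 0 ≤ C) (hβ : 0 < β) (F : Fol C β)
    (hx : x ∈ unitInterval) {c : ℝ≥0∞}
    (hle : x ≤ q → volume (F.f x '' (unitInterval ∩ Eᶜ)) ≤ c)
    (hgt : q < x → volume (F.f x '' (unitInterval ∩ E)) ≤ c) :
    ∫⁻ z in unitInterval, ‖{p : ℝ × ℝ | p.1 ≤ q}.indicator (1 : ℝ × ℝ → ℝ) (x, z) -
      E.indicator 1 (hinv F.f x z)‖ₑ ≤ c := by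
  have hslice {S : Set ℝ} (hS : ∀ y ∉ S,
      ‖{p : ℝ × ℝ | p.1 ≤ q}.indicator (1 : ℝ × ℝ → ℝ) (x, 0) - E.indicator 1 y‖ₑ = 0) :=
    lintegral_comp_hinv_le hC hβ F hx (fun y => enorm_indicator_sub_indicator_le_one _ _ _ _) hS
  rcases le_or_gt x q with hxq | hqx
  · exact (hslice (S := Eᶜ) fun y hy => by simp [hxq, not_notMem.1 hy]).trans (hle hxq)
  · exact (hslice (S := E) fun y hy => by simp [hqx.not_ge, hy]).trans (hgt hqx)

lemma leafDefect_indicator_le (hC : 0 ≤ C) (hβ : 0 < β) (F : Fol C β) {η : ℝ≥0} {c : ℝ≥0∞}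
    (hleft : ∀ x ∈ unitInterval, η ≤ x → x ≤ q → volume (F.f x '' (unitInterval ∩ Eᶜ)) ≤ c)
    (hright : ∀ x ∈ unitInterval, q + η ≤ x → volume (F.f x '' (unitInterval ∩ E)) ≤ c) :
    leafDefect F {p | p.1 ≤ q} (E.indicator 1) ≤ η + η + c := by
  set T : Set ℝ := Icc 0 (η : ℝ) ∪ Icc q (q + η)
  have hT : volume T ≤ η + η := by
    refine (measure_union_le _ _).trans_eq ?_
    rw [Real.volume_Icc, Real.volume_Icc, sub_zero, add_sub_cancel_left, ENNReal.ofReal_coe_nnreal]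
  set s : ℝ → ℝ≥0∞ := fun x => ∫⁻ z in unitInterval,
    ‖{p : ℝ × ℝ | p.1 ≤ q}.indicator (1 : ℝ × ℝ → ℝ) (x, z) - E.indicator 1 (hinv F.f x z)‖ₑ
  have hs_one (x : ℝ) : s x ≤ 1 :=
    (lintegral_mono fun z => enorm_indicator_sub_indicator_le_one _ _ _ _).trans
      (by rw [lintegral_one, Measure.restrict_apply_univ, volume_unitInterval])
  have hs : ∀ x ∈ unitInterval, s x ≤ T.indicator 1 x + c := fun x hx => by
    by_cases hxT : x ∈ T
    · rw [indicator_of_mem hxT]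
      exact (hs_one x).trans le_self_add
    · rw [mem_union, not_or, mem_Icc, mem_Icc, not_and, not_and, not_le, not_le] at hxT
      exact (lintegral_enorm_sub_indicator_hinv_le hC hβ F hx (hleft x hx (hxT.1 hx.1).le)
        fun hqx => hright x hx (hxT.2 hqx.le).le).trans le_add_self
  calc leafDefect F {p | p.1 ≤ q} (E.indicator 1) ≤ ∫⁻ x in unitInterval, s x := by
        rw [leafDefect, muM_eq_prod]
        exact lintegral_prod_le _
    _ ≤ ∫⁻ x in unitInterval, (T.indicator 1 x + c) := setLIntegral_mono' measurableSet_Icc hs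
    _ = (∫⁻ x in unitInterval, T.indicator 1 x) + c := by
        rw [lintegral_add_right _ measurable_const, lintegral_const, Measure.restrict_apply_univ,
          volume_unitInterval, mul_one]
    _ ≤ η + η + c := by
        gcongr
        exact (setLIntegral_le_lintegral _ _).trans ((lintegral_indicator_one_le _).trans hT)

lemma IsFol.exists_unifClose_leafDefect_lt {C' δ l L : ℝ} {g gx : ℝ → ℝ → ℝ}
    (hg : IsFol C' β g gx) (hC' : C' ∈ Ioo 0 C) (hβ₀ : 0 < β) (hβ : β < 1) (hl : 0 < l) (hL : 0 < L)
    (hincr : ∀ x ∈ unitInterval, IncrementsIn (l * ·) (L * ·) (g x)) (hδ : 0 < δ) (hq : 0 < q)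
    (hε : ε ≠ 0) :
    ∃ G : Fol C β, UnifClose δ G.f g ∧ UnifClose δ G.fx gx ∧
      ∃ E, MeasurableSet E ∧ leafDefect G {p | p.1 ≤ q} (E.indicator 1) < ε := by
  obtain ⟨e, he, heε⟩ := ENNReal.lt_iff_exists_nnreal_btwn.1 (pos_iff_ne_zero.2 hε)
  lift L to ℝ≥0 using hL.le
  lift q to ℝ≥0 using hq.le
  rw [NNReal.coe_pos] at hL hq
  rw [ENNReal.coe_pos] at he
  set η : ℝ≥0 := min q (e / 4)
  set σ : ℝ≥0 := min 1 (e / (2 * L))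
  have hη : (0 : ℝ) < η := NNReal.coe_pos.2 (by positivity)
  have hηq : (η : ℝ) ≤ q := NNReal.coe_le_coe.2 (min_le_left _ _)
  have hσ : (σ : ℝ) ∈ Ioc 0 1 :=
    ⟨NNReal.coe_pos.2 (by positivity), NNReal.coe_le_coe.2 (min_le_left _ _)⟩
  have hw := contDiff_cutoff q η
  have hwI : MapsTo (cutoff q η) unitInterval unitInterval := fun x _ => cutoff_mem hη hηq x
  have hw₀ := cutoff_zero hη.le q.2
  obtain ⟨n, hfol, ⟨hzg, hzgx⟩, hn⟩ :=
    ((hg.eventually_isFol_zigzag hC' hβ₀ hβ hl L.2 hincr hw hwI hw₀ hσ).and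
    (((hg.isC1Family hC'.1.le hβ₀).eventually_unifClose_zigzag hw hwI
      (Ioc_subset_Icc_self hσ) hδ).and (eventually_gt_atTop 0))).exists
  refine ⟨⟨_, _, hfol⟩, hzg, hzgx, lowerHalves n, measurableSet_lowerHalves n, ?_⟩
  refine (leafDefect_indicator_le (hC'.1.trans hC'.2).le hβ₀ _
    (fun x hx hηx hxq => volume_zigzag_image_compl_lowerHalves_le hn hl.le (hincr x hx)
      (Ioc_subset_Icc_self hσ) (cutoff_of_le hη hηx hxq))
    (fun x hx hqx => volume_zigzag_image_lowerHalves_le hn hl.le (hincr x hx)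
      (Ioc_subset_Icc_self hσ) (cutoff_of_add_le hη q.2 hqx))).trans_lt (lt_of_le_of_lt ?_ heε)
  have hσ' : L * σ ≤ e / 2 :=
    (mul_le_mul_right (min_le_right _ _) L).trans_eq (by field_simp)
  norm_cast
  calc η + η + L * σ ≤ e / 4 + e / 4 + e / 2 :=
        add_le_add (add_le_add (min_le_right _ _) (min_le_right _ _)) hσ'
    _ = e := by ring

lemma isDenseWrt_nearlySaturated (hC : 1 < C) (hα : 0 ≤ α) (hαβ : α < β) (hβ : β < 1)
    (hq : 0 < q) (hε : ε ≠ 0) :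
    IsDenseWrt (dalphaF α) (nearlySaturated C β {p | p.1 ≤ q} ε) := by
  intro F r hr
  have hβ₀ : 0 < β := hα.trans_lt hαβ
  obtain ⟨δ, hδ, hdist⟩ := Fol.exists_dalphaF_lt hC.le hα hαβ hβ.le hr
  obtain ⟨C', hC', l, hl, L, hL, g, gx, hg, hincr, hgF, hgxF⟩ :=
    F.isFol.exists_unifClose_biLipschitz hC hβ₀ hβ.le (half_pos hδ)
  obtain ⟨G, hGg, hGgx, E, hE, hGE⟩ :=
    hg.exists_unifClose_leafDefect_lt hC' hβ₀ hβ hl hL hincr (half_pos hδ) hq hε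
  exact ⟨G, mem_nearlySaturated_of_indicator (one_pos.trans hC) hβ₀
    (measurableSet_le measurable_fst measurable_const) hE hGE,
    hdist F G (add_halves δ ▸ hGg.trans hgF) (add_halves δ ▸ hGgx.trans hgxF)⟩

end LeafDefect

section ZeroOneLaw

variable {X : Type*} [MeasurableSpace X] {μ : Measure X}

lemma min_measure_compl_le_lintegral {A : Set X} (hA : MeasurableSet A) (c : ℝ) :
    min (μ A) (μ Aᶜ) ≤ ∫⁻ p, ‖A.indicator 1 p - c‖ₑ ∂μ := by
  have hin : ∫⁻ p in A, ‖A.indicator 1 p - c‖ₑ ∂μ = ‖1 - c‖ₑ * μ A := by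
    rw [← setLIntegral_const]
    exact setLIntegral_congr_fun hA fun p hp => by simp [indicator_of_mem hp]
  have hout : ∫⁻ p in Aᶜ, ‖A.indicator 1 p - c‖ₑ ∂μ = ‖c‖ₑ * μ Aᶜ := by
    rw [← setLIntegral_const]
    exact setLIntegral_congr_fun hA.compl fun p hp => by simp [indicator_of_notMem hp]
  have hsum : 1 ≤ ‖1 - c‖ₑ + ‖c‖ₑ := by simpa using enorm_add_le (1 - c) c
  calc min (μ A) (μ Aᶜ) ≤ (‖1 - c‖ₑ + ‖c‖ₑ) * min (μ A) (μ Aᶜ) := le_mul_of_one_le_left' hsum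
    _ ≤ ‖1 - c‖ₑ * μ A + ‖c‖ₑ * μ Aᶜ := by
        rw [add_mul]
        gcongr
        exacts [min_le_left _ _, min_le_right _ _]
    _ = ∫⁻ p, ‖A.indicator 1 p - c‖ₑ ∂μ := by rw [← lintegral_add_compl _ hA, hin, hout]

lemma hasCountableSeparatingOn_Iic_rat_pos :
    HasCountableSeparatingOn ℝ (fun U => ∃ q : ℚ, 0 < q ∧ U = Iic (q : ℝ)) (Ici 0) := by
  refine ⟨⟨(fun q : ℚ => Iic (q : ℝ)) '' Ioi 0, (to_countable _).image _, ?_, ?_⟩⟩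
  · rintro _ ⟨q, hq, rfl⟩
    exact ⟨q, hq, rfl⟩
  · intro x hx y hy h
    by_contra hne
    wlog hxy : x < y generalizing x y
    · exact this y hy x hx (fun s hs => (h s hs).symm) (Ne.symm hne)
        ((not_lt.1 hxy).lt_of_ne (Ne.symm hne))
    obtain ⟨q, hxq, hqy⟩ := exists_rat_btwn hxy
    have hq : 0 < q := by exact_mod_cast hx.trans_lt hxq
    exact hqy.not_ge ((h _ ⟨q, hq, rfl⟩).1 hxq.le)

lemma exists_ae_eq_const_of_zero_one {g : X → ℝ} (hg : ∀ᵐ p ∂μ, 0 ≤ g p)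
    (h : ∀ q : ℚ, 0 < q → μ {p | g p ≤ q} = 0 ∨ μ {p | g p ≤ q}ᶜ = 0) :
    ∃ x, ∀ᵐ p ∂μ, g p = x := by
  have := hasCountableSeparatingOn_Iic_rat_pos
  obtain ⟨x, -, hx⟩ := exists_mem_eventuallyEq_const_of_eventually_mem_of_forall_separating
    (l := ae μ) (f := g) (s := Ici 0) (fun U => ∃ q : ℚ, 0 < q ∧ U = Iic (q : ℝ)) hg
    ⟨0, mem_Ici.2 le_rfl⟩ (by
      rintro _ ⟨q, hq, rfl⟩
      exact (h q hq).symm.imp id measure_eq_zero_iff_ae_notMem.1)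
  exact ⟨x, hx⟩

lemma eq_dirac_of_ae_eq [IsProbabilityMeasure μ] {a : X} (h : ∀ᵐ p ∂μ, p = a) :
    μ = Measure.dirac a := by
  simpa [Measure.map_const] using Measure.map_congr (f := id) (g := fun _ => a) h

end ZeroOneLaw

section Disintegration

variable {C β y : ℝ} {F : Fol C β} {ν : ℝ → Measure (ℝ × ℝ)}

lemma Fol.ae_quotM_mem_unitInterval (hC : 0 < C) (hβ : 0 < β) (F : Fol C β) :
    ∀ᵐ y ∂quotM F, y ∈ unitInterval :=
  (ae_map_iff (F.aemeasurable_projF hC hβ) measurableSet_Icc).2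
    ((ae_restrict_mem measurableSet_MSq).mono fun _ hp => F.isFol.hinv_mem hC.le hβ hp.1 hp.2)

lemma measurableSet_leaf (F : Fol C β) (hy : y ∈ unitInterval) : MeasurableSet (Leaf F y) :=
  (isCompact_Icc.image_of_continuousOn (continuousOn_id.prodMk fun x hx =>
    (F.isFol.hasDeriv y hy x hx).continuousWithinAt)).measurableSet

lemma projF_of_mem_leaf (hC : 0 < C) (hy : y ∈ unitInterval) {p : ℝ × ℝ} (hp : p ∈ Leaf F y) :
    projF F.f p = y := by
  obtain ⟨x, hx, rfl⟩ := hp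
  exact F.isFol.hinv_apply hC hx hy

namespace IsDisint

lemma ae_ae_mem_leaf (hν : IsDisint F ν) (hC : 0 < C) (hβ : 0 < β) :
    ∀ᵐ y ∂quotM F, y ∈ unitInterval ∧ ∀ᵐ p ∂ν y, p ∈ Leaf F y := by
  filter_upwards [F.ae_quotM_mem_unitInterval hC hβ, hν.2.2.1] with y hy hleaf
  have := hν.1 y
  exact ⟨hy, (prob_compl_eq_zero_iff (measurableSet_leaf F hy)).2 hleaf⟩

lemma measurable (hν : IsDisint F ν) : Measurable ν :=
  Measure.measurable_of_measurable_coe ν hν.2.1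

lemma muM_eq_bind (hν : IsDisint F ν) : muM = (quotM F).bind ν := by
  ext E hE
  rw [hν.2.2.2 E hE, Measure.bind_apply hE hν.measurable.aemeasurable]

lemma lintegral_min_le_leafDefect (hν : IsDisint F ν) (hC : 0 < C) (hβ : 0 < β) {A : Set (ℝ × ℝ)}
    (hA : MeasurableSet A) {φ : ℝ → ℝ} (hφ : Continuous φ) :
    ∫⁻ y, min (ν y A) (ν y Aᶜ) ∂quotM F ≤ leafDefect F A φ := by
  have hm : AEMeasurable (fun p => ‖A.indicator 1 p - φ (projF F.f p)‖ₑ) muM :=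
    ((measurable_one.indicator hA).aemeasurable.sub
      (hφ.measurable.comp_aemeasurable (F.aemeasurable_projF hC hβ))).enorm
  have hbind := hν.muM_eq_bind
  rw [leafDefect, hbind, Measure.lintegral_bind hν.measurable.aemeasurable (hbind ▸ hm)]
  refine lintegral_mono_ae ?_
  filter_upwards [hν.ae_ae_mem_leaf hC hβ] with y ⟨hy, hleaf⟩
  refine (min_measure_compl_le_lintegral hA (φ y)).trans_eq (lintegral_congr_ae ?_)
  filter_upwards [hleaf] with p hp
  rw [projF_of_mem_leaf hC hy hp]

lemma ae_zero_one (hν : IsDisint F ν) (hC : 0 < C) (hβ : 0 < β) {A : Set (ℝ × ℝ)}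
    (hA : MeasurableSet A) (hF : ∀ m : ℕ, F ∈ nearlySaturated C β A (m : ℝ≥0∞)⁻¹) :
    ∀ᵐ y ∂quotM F, ν y A = 0 ∨ ν y Aᶜ = 0 := by
  have hzero : ∫⁻ y, min (ν y A) (ν y Aᶜ) ∂quotM F = 0 := by
    refine le_zero_iff.1 (ge_of_tendsto' ENNReal.tendsto_inv_nat_nhds_zero fun m => ?_)
    obtain ⟨φ, hφ, -, hlt⟩ := hF m
    exact (hν.lintegral_min_le_leafDefect hC hβ hA hφ).trans hlt.le
  rw [lintegral_eq_zero_iff ((hν.2.1 A hA).min (hν.2.1 Aᶜ hA.compl))] at hzero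
  filter_upwards [hzero] with y hy
  exact (min_eq_iff.1 hy).imp And.left And.left

lemma exists_eq_dirac (hν : IsDisint F ν) (hleaf : ∀ᵐ p ∂ν y, p ∈ Leaf F y)
    (h : ∀ q : ℚ, 0 < q → ν y {p | p.1 ≤ q} = 0 ∨ ν y {p | p.1 ≤ q}ᶜ = 0) :
    ∃ x ∈ unitInterval, ν y = Measure.dirac (x, F.f x y) := by
  have := hν.1 y
  obtain ⟨x, hx⟩ := exists_ae_eq_const_of_zero_one (g := Prod.fst)
    (hleaf.mono fun p ⟨x, hx, hp⟩ => hp ▸ hx.1) h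
  have hpoint : ∀ᵐ p ∂ν y, x ∈ unitInterval ∧ p = (x, F.f x y) := by
    filter_upwards [hx, hleaf]
    rintro _ rfl ⟨x, hxI, rfl⟩
    exact ⟨hxI, rfl⟩
  obtain ⟨-, hxI, -⟩ := hpoint.exists
  exact ⟨x, hxI, eq_dirac_of_ae_eq (hpoint.mono fun p hp => hp.2)⟩

end IsDisint

end Disintegration

/-- There is a residual subset `R` of `(F_(C,β), d_α)` such that for every
`f ∈ R`, for `μ̂`-almost every `y` the conditional measure `μ_y` of the Rokhlin disintegration
is a Dirac measure `δ_{(x_y, f(x_y, y))}` for some `x_y ∈ [0,1]`. -/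
theorem stmt0 (C β α : ℝ) (hC : 1 < C) (hα : 0 ≤ α) (hαβ : α < β) (hβ : β < 1) :
    ∃ R : Set (Fol C β),
      (∃ G : ℕ → Set (Fol C β),
        (∀ n, IsOpenWrt (dalphaF α) (G n) ∧ IsDenseWrt (dalphaF α) (G n)) ∧
        (⋂ n, G n) ⊆ R) ∧
      ∀ F ∈ R, ∀ ν : ℝ → Measure (ℝ × ℝ), IsDisint F ν →
        ∀ᵐ y ∂quotM F, ∃ x ∈ unitInterval, ν y = Measure.dirac (x, F.f x y) := by
  have hC₀ : 0 < C := one_pos.trans hC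
  have hβ₀ : 0 < β := hα.trans_lt hαβ
  have : Nonempty {q : ℚ // 0 < q} := ⟨⟨1, one_pos⟩⟩
  obtain ⟨e, he⟩ := exists_surjective_nat ({q : ℚ // 0 < q} × ℕ)
  set G : ℕ → Set (Fol C β) := fun n =>
    nearlySaturated C β {p | p.1 ≤ ((e n).1 : ℝ)} ((e n).2 : ℝ≥0∞)⁻¹
  refine ⟨⋂ n, G n, ⟨G, fun n => ⟨isOpenWrt_nearlySaturated hC₀ hβ₀ _ _,
    isDenseWrt_nearlySaturated hC hα hαβ hβ (Rat.cast_pos.2 (e n).1.2) (by simp)⟩, subset_rfl⟩,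
    fun F hF ν hν => ?_⟩
  have hzero_one (q : {q : ℚ // 0 < q}) :
      ∀ᵐ y ∂quotM F, ν y {p | p.1 ≤ (q : ℝ)} = 0 ∨ ν y {p | p.1 ≤ (q : ℝ)}ᶜ = 0 := by
    refine hν.ae_zero_one hC₀ hβ₀ (measurableSet_le measurable_fst measurable_const) fun m => ?_
    obtain ⟨n, hn⟩ := he (q, m)
    simpa only [G, hn] using mem_iInter.1 hF n
  filter_upwards [hν.ae_ae_mem_leaf hC₀ hβ₀, ae_all_iff.2 hzero_one] with y hleaf hy
  exact hν.exists_eq_dirac hleaf.2 fun q hq => hy ⟨q, hq⟩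

end
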